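/- arXiv:2203.03848 — 2 statements merged into one kernel-verified Lean document; each statement's English description precedes it below -/
import Mathlib

section
/- Let k be a field with char(k) ≠ 2 and let a, b ∈ kˣ be such that the quaternion algebra Q = (a,b)_k is a division ring. Let K = k(t₁,t₂,t₃) be the fraction field of the polynomial ring k[t₁,t₂,t₃]. Then the 10-dimensional diagonal quadratic form over K given by q' = ⟨-a, -b, ab⟩ ⊥ ⟨t₁, t₂, -t₁t₂⟩ ⊥ t₃·⟨1, -t₁, -t₂, t₁t₂⟩, i.e. the diagonal form ⟨-a, -b, ab, t₁, t₂, -t₁t₂, t₃, -t₃t₁, -t₃t₂, t₃t₁t₂⟩, is anisotropic, has trivial signed discriminant (−det(q') is a square in K), and its Clifford algebra C(q') is Brauer equivalent to the quaternion algebra (a,b)_K: M_r(C(q')) ≅ M_s((a,b)_K) as K-algebras for some r, s ≥ 1. -/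
/-!
STATEMENT 6: Let `k` be a field with `char k ≠ 2` and `a, b ∈ kˣ` with `(a,b)_k` a
division ring.  Let `K = k(t₁,t₂,t₃)`.  Then the ten-dimensional diagonal form
`q' = ⟨-a, -b, ab, t₁, t₂, -t₁t₂, t₃, -t₃t₁, -t₃t₂, t₃t₁t₂⟩` over `K` is anisotropic,
has trivial signed discriminant (`-det(q')` is a square in `K`), and its Clifford
algebra is Brauer equivalent to `(a,b)_K`.
-/

open scoped Quaternion

universe u

/-!
*Anisotropy.* Give the variables a monomial order. In a nontrivial zero of a diagonal form with
monomial weights `c i • X ^ m i`, the terms of maximal degree cancel among themselves. Their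
exponents `m i` agree modulo 2, so their leading coefficients form a nontrivial zero of the
subform of `⟨c i⟩` supported on one parity class. Here the classes are singletons, except for
`⟨-a, -b, ab⟩`, whose values are the negatives of the squares of the pure quaternions.

*Clifford algebra.* Let `e i` be anticommuting elements with nonzero scalar squares, even in
number. The products of the `e i` over subsets are simultaneous eigenvectors of the commuting
operators `x ↦ e i * x * e i`, for pairwise distinct characters, so they are linearly independent.
Hence a linear map to an algebra of the right dimension whose squares are the values of the form
identifies this algebra with the Clifford algebra. Such maps come from two matrices: the square of
`!![x, y; z, -x]` is `x² + yz` when `x` commutes with `y` and `z` and `yz = zy`; in particular, if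
`f² = α` and `g² = β`, then `!![1 ⊗ g, f ⊗ 1; -(f ⊗ 1), -(1 ⊗ g)]` squares to `β - α`. Applied to
pure quaternions and to the norm form `x * star x`, they realise the Clifford algebra as
`M₂(ℍ[a, b] ⊗ M₂(End ℍ[t₁, t₂])) ≅ M₁₆(ℍ[a, b])`.
-/

section DiagonalForms

open QuadraticMap

theorem weightedSumSquares_anisotropic_comp {R ι κ : Type*} [CommSemiring R] [Fintype ι]
    [Fintype κ] {w : ι → R} (hw : (weightedSumSquares R w).Anisotropic) {f : κ → ι}
    (hf : Function.Injective f) : (weightedSumSquares R (w ∘ f)).Anisotropic := by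
  intro v hv
  have hext : Function.extend f v 0 = 0 := by
    apply hw
    rw [weightedSumSquares_apply] at hv ⊢
    rw [← hv]
    refine (Fintype.sum_of_injective f hf _ _ (fun i hi => ?_) fun j => ?_).symm
    · rw [Function.extend_apply' _ _ _ hi, Pi.zero_apply, mul_zero, smul_zero]
    · rw [hf.extend_apply, Function.comp_apply]
  exact funext fun j => by rw [← hf.extend_apply v 0 j, hext, Pi.zero_apply, Pi.zero_apply]

theorem weightedSumSquares_anisotropic_of_subsingleton {R ι : Type*} [CommSemiring R]
    [NoZeroDivisors R] [Fintype ι] [Subsingleton ι] {w : ι → R} (hw : ∀ i, w i ≠ 0) :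
    (weightedSumSquares R w).Anisotropic := by
  intro v hv
  funext i
  rw [weightedSumSquares_apply, Fintype.sum_subsingleton _ i] at hv
  simpa [hw i] using hv

theorem weightedSumSquares_algebraMap_anisotropic {R K ι : Type*} [CommRing R] [Field K]
    [Algebra R K] [IsFractionRing R K] [Fintype ι] {w : ι → R}
    (hw : (weightedSumSquares R w).Anisotropic) :
    (weightedSumSquares K (algebraMap R K ∘ w)).Anisotropic := by
  intro v hv
  obtain ⟨d, hd⟩ := IsLocalization.exist_integer_multiples_of_finite (nonZeroDivisors R) v
  choose p hp using hd
  have hd0 : algebraMap R K d ≠ 0 := IsLocalization.map_units K d |>.ne_zero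
  have hp0 : p = 0 := by
    apply hw
    apply IsFractionRing.injective R K
    rw [weightedSumSquares_apply] at hv
    calc algebraMap R K (weightedSumSquares R w p)
        = algebraMap R K d ^ 2 * ∑ i, (algebraMap R K ∘ w) i • (v i * v i) := by
          rw [weightedSumSquares_apply, map_sum, Finset.mul_sum]
          refine Finset.sum_congr rfl fun i _ => ?_
          simp only [smul_eq_mul, map_mul, hp, Algebra.smul_def, Function.comp_apply]
          ring
      _ = algebraMap R K 0 := by rw [hv, mul_zero, map_zero]
  funext i
  have hpi : algebraMap R K d * v i = 0 := by
    rw [← Algebra.smul_def, ← hp, hp0, Pi.zero_apply, map_zero]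
  exact (mul_eq_zero.mp hpi).resolve_left hd0

theorem isOrtho_weightedSumSquares_single {R ι : Type*} [CommRing R] [Fintype ι] [DecidableEq ι]
    (w : ι → R) {i j : ι} (hij : i ≠ j) :
    (weightedSumSquares R w).IsOrtho (Pi.single i 1) (Pi.single j 1) := by
  rw [isOrtho_def]
  simp only [weightedSumSquares_apply, ← Finset.sum_add_distrib, Pi.add_apply]
  refine Finset.sum_congr rfl fun l _ => ?_
  rcases eq_or_ne l i with rfl | hli
  · simp [hij]
  · simp [hli]

end DiagonalForms

section MonomialWeights

open MvPolynomial
open scoped MonomialOrder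

variable {R σ : Type*} [CommSemiring R]

theorem coeff_degree_monomial_mul_mul_self (o : MonomialOrder σ) (m : σ →₀ ℕ) (c : R)
    (p : MvPolynomial σ R) :
    coeff (m + 2 • o.degree p) (monomial m c * (p * p)) =
      c * (o.leadingCoeff p * o.leadingCoeff p) := by
  rw [coeff_monomial_mul, ← pow_two, ← pow_two, o.coeff_pow_nsmul_degree]

theorem coeff_monomial_mul_mul_self_eq_zero_of_lt (o : MonomialOrder σ) {m d : σ →₀ ℕ} (c : R)
    {p : MvPolynomial σ R} (h : m + 2 • o.degree p ≺[o] d) :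
    coeff d (monomial m c * (p * p)) = 0 := by
  refine o.coeff_eq_zero_of_lt (lt_of_le_of_lt ?_ h)
  rw [← pow_two, map_add]
  refine o.degree_mul_le.trans ?_
  rw [map_add]
  exact add_le_add (o.degree_monomial_le _) (o.degree_pow_le 2)

theorem weightedSumSquares_monomial_anisotropic (o : MonomialOrder σ) {ι : Type*} [Fintype ι]
    {m : ι → σ →₀ ℕ} {c : ι → R}
    (h : ∀ s : Finset ι, (∀ i ∈ s, ∀ j ∈ s, ∀ x, m i x ≡ m j x [MOD 2]) →
      (QuadraticMap.weightedSumSquares R fun i : s => c i).Anisotropic) :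
    (QuadraticMap.weightedSumSquares (MvPolynomial σ R)
      fun i => monomial (m i) (c i)).Anisotropic := by
  classical
  intro v hv
  by_contra hne
  obtain ⟨i₁, hi₁⟩ := Function.ne_iff.mp hne
  let deg : ι → (σ →₀ ℕ) := fun i => m i + 2 • o.degree (v i)
  obtain ⟨i₀, hi₀, hmax⟩ := Finset.exists_max_image {i | v i ≠ 0} (o.toSyn ∘ deg)
    ⟨i₁, by simpa using hi₁⟩
  simp only [Finset.mem_filter, Finset.mem_univ, true_and, Function.comp_apply] at hi₀ hmax
  let s : Finset ι := {i | v i ≠ 0 ∧ deg i = deg i₀}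
  have hs : ∀ {i}, i ∈ s ↔ v i ≠ 0 ∧ deg i = deg i₀ := by simp [s]
  have hparity : ∀ i ∈ s, ∀ j ∈ s, ∀ x, m i x ≡ m j x [MOD 2] := by
    intro i hi j hj x
    have hdeg := DFunLike.congr_fun ((hs.mp hi).2.trans (hs.mp hj).2.symm) x
    simp only [deg, Finsupp.add_apply, Finsupp.smul_apply, smul_eq_mul] at hdeg
    unfold Nat.ModEq
    omega
  have hvanish : ∀ i ∉ s, coeff (deg i₀) (monomial (m i) (c i) * (v i * v i)) = 0 := by
    intro i hi
    by_cases hvi : v i = 0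
    · rw [hvi, mul_zero, mul_zero, coeff_zero]
    · exact coeff_monomial_mul_mul_self_eq_zero_of_lt o (c i) <|
        (hmax i hvi).lt_of_ne fun heq => hi (hs.mpr ⟨hvi, o.toSyn.injective heq⟩)
  have hlead : QuadraticMap.weightedSumSquares R (fun i : s => c i)
      (fun i => o.leadingCoeff (v i)) = 0 := by
    have hcoeff := congrArg (coeff (deg i₀)) hv
    simp only [QuadraticMap.weightedSumSquares_apply, smul_eq_mul, coeff_sum, coeff_zero] at hcoeff
    rw [← Finset.sum_subset s.subset_univ fun i _ => hvanish i, ← Finset.sum_coe_sort s] at hcoeff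
    rw [QuadraticMap.weightedSumSquares_apply, ← hcoeff]
    refine Finset.sum_congr rfl fun i _ => ?_
    rw [← (hs.mp i.2).2, coeff_degree_monomial_mul_mul_self, smul_eq_mul]
  have hlead₀ := congrFun (h s hparity _ hlead) ⟨i₀, hs.mpr ⟨hi₀, rfl⟩⟩
  exact hi₀ (o.leadingCoeff_eq_zero_iff.mp hlead₀)

end MonomialWeights

section Quaternions

variable {R : Type*} [CommRing R] (a b : R)

/-- The inclusion of the pure quaternions `v₀ i + v₁ j + v₂ k` into `ℍ[R,a,b]`. -/
def pureQuaternion : (Fin 3 → R) →ₗ[R] ℍ[R,a,b] where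
  toFun v := ⟨0, v 0, v 1, v 2⟩
  map_add' v w := by ext <;> simp
  map_smul' r v := by ext <;> simp

theorem pureQuaternion_injective : Function.Injective (pureQuaternion a b) := by
  intro v w hvw
  obtain ⟨-, h₀, h₁, h₂⟩ := QuaternionAlgebra.ext_iff.mp hvw
  funext i
  fin_cases i
  exacts [h₀, h₁, h₂]

theorem pureQuaternion_mul_self (v : Fin 3 → R) :
    pureQuaternion a b v * pureQuaternion a b v =
      algebraMap R _ (QuadraticMap.weightedSumSquares R ![a, b, -(a * b)] v) := by
  simp only [pureQuaternion, LinearMap.coe_mk, AddHom.coe_mk, QuaternionAlgebra.mk_mul_mk,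
    QuadraticMap.weightedSumSquares_apply, Fin.sum_univ_three, Matrix.cons_val, smul_eq_mul,
    QuaternionAlgebra.algebraMap_eq]
  ext <;> ring

theorem weightedSumSquares_pureQuaternion_anisotropic [IsReduced ℍ[R,a,b]] :
    (QuadraticMap.weightedSumSquares R ![-a, -b, a * b]).Anisotropic := by
  intro v hv
  have hneg : QuadraticMap.weightedSumSquares R ![a, b, -(a * b)] v = 0 := by
    simp only [QuadraticMap.weightedSumSquares_apply, Fin.sum_univ_three, Matrix.cons_val,
      smul_eq_mul] at hv ⊢
    linear_combination -hv
  have hsq : pureQuaternion a b v ^ 2 = 0 := by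
    rw [pow_two, pureQuaternion_mul_self, hneg, map_zero]
  exact (map_eq_zero_iff _ (pureQuaternion_injective a b)).mp (eq_zero_of_pow_eq_zero hsq)

/-- Quaternion conjugation as a linear map over the base ring. -/
def quaternionConj : ℍ[R,a,b] →ₗ[R] ℍ[R,a,b] where
  toFun := star
  map_add' := star_add
  map_smul' r q := QuaternionAlgebra.star_smul' r q

/-- The quaternion with prescribed coordinates in the basis `1, i, j, k`. -/
def quaternionOfCoords : (Fin 4 → R) →ₗ[R] ℍ[R,a,b] :=
  (QuaternionAlgebra.linearEquivTuple a 0 b).symm.toLinearMap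

theorem quaternionOfCoords_mul_star (v : Fin 4 → R) :
    quaternionOfCoords a b v * star (quaternionOfCoords a b v) =
      algebraMap R _ (QuadraticMap.weightedSumSquares R ![1, -a, -b, a * b] v) := by
  simp only [quaternionOfCoords, LinearEquiv.coe_coe, QuaternionAlgebra.coe_linearEquivTuple_symm,
    QuaternionAlgebra.equivTuple_symm_apply, QuaternionAlgebra.star_mk,
    QuaternionAlgebra.mk_mul_mk, QuadraticMap.weightedSumSquares_apply, Fin.sum_univ_four,
    Matrix.cons_val, smul_eq_mul, QuaternionAlgebra.algebraMap_eq]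
  ext <;> ring

end Quaternions

section OrthogonalProducts

/-- The product of the `e i` over `i ∈ I`, in the arbitrary order of `Finset.toList`. For
anticommuting `e i`, another order would only change the sign. -/
noncomputable def finsetListProd {ι T : Type*} [Monoid T] (e : ι → T) (I : Finset ι) : T :=
  (I.toList.map e).prod

theorem finsetListProd_ne_zero {ι T : Type*} [MonoidWithZero T] [Nontrivial T] {e : ι → T}
    (hunit : ∀ i, IsUnit (e i)) (I : Finset ι) : finsetListProd e I ≠ 0 := by
  refine (List.prod_isUnit fun x hx => ?_).ne_zero
  obtain ⟨i, -, rfl⟩ := List.mem_map.mp hx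
  exact hunit i

theorem mul_list_map_prod_of_forall_mul_eq_smul {R ι T : Type*} [CommSemiring R] [Semiring T]
    [Algebra R T] {y : T} {e : ι → T} {c : ι → R} {l : List ι}
    (h : ∀ i ∈ l, y * e i = c i • (e i * y)) :
    y * (l.map e).prod = (l.map c).prod • ((l.map e).prod * y) := by
  induction l with
  | nil => simp
  | cons i l ih =>
    simp only [List.map_cons, List.prod_cons]
    rw [← mul_assoc, h i List.mem_cons_self, smul_mul_assoc, mul_assoc,
      ih fun j hj => h j (List.mem_cons_of_mem i hj), mul_smul_comm, smul_smul, mul_assoc]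

theorem mul_finsetListProd (R : Type*) {ι T : Type*} [CommRing R] [Ring T] [Algebra R T]
    [DecidableEq ι] {e : ι → T} (hanti : ∀ i j, i ≠ j → e i * e j = -(e j * e i))
    (j : ι) (I : Finset ι) :
    e j * finsetListProd e I = (-1 : R) ^ (I.erase j).card • (finsetListProd e I * e j) := by
  have hsign : ∀ i, e j * e i = (if i = j then 1 else -1 : R) • (e i * e j) := by
    intro i
    split_ifs with hij
    · rw [hij, one_smul]
    · rw [hanti j i (Ne.symm hij), neg_one_smul]
  rw [finsetListProd, mul_list_map_prod_of_forall_mul_eq_smul fun i _ => hsign i,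
    Finset.prod_map_toList, Finset.prod_ite, Finset.prod_const_one, one_mul, Finset.prod_const,
    Finset.filter_ne']

theorem even_card_erase_iff {ι : Type*} [DecidableEq ι] {I : Finset ι} {j : ι} :
    Even (I.erase j).card ↔ (j ∈ I ↔ ¬Even I.card) := by
  by_cases hj : j ∈ I
  · simp only [← Finset.card_erase_add_one hj, Nat.even_add_one, hj, not_not, true_iff]
  · simp only [Finset.erase_eq_of_notMem hj, hj, false_iff, not_not]

theorem finset_eq_of_even_card_erase_iff {ι : Type*} [Fintype ι] [DecidableEq ι]
    (hι : Even (Fintype.card ι)) {I J : Finset ι}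
    (h : ∀ j, Even (I.erase j).card ↔ Even (J.erase j).card) : I = J := by
  simp only [even_card_erase_iff] at h
  by_cases hcard : Even I.card ↔ Even J.card
  · exact Finset.ext fun j => by grind
  · have hcompl : I = Jᶜ := Finset.ext fun j => by grind [Finset.mem_compl]
    have hadd : J.card + Jᶜ.card = Fintype.card ι := Finset.card_add_card_compl J
    grind

theorem commute_mulLeftRight_self {R A : Type*} [CommSemiring R] [Ring A] [Algebra R A] {x y : A}
    (hxy : x * y = -(y * x)) :
    Commute (LinearMap.mulLeftRight R (x, x)) (LinearMap.mulLeftRight R (y, y)) := by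
  refine LinearMap.ext fun z => ?_
  have hleft : x * (y * z * y) * x = x * y * z * (y * x) := by noncomm_ring
  have hright : y * (x * z * x) * y = y * x * z * (x * y) := by noncomm_ring
  simp only [Module.End.mul_apply, LinearMap.mulLeftRight_apply]
  rw [hleft, hright, hxy, neg_mul, neg_mul, mul_neg]

theorem linearIndependent_finsetListProd {K ι T : Type*} [Field K] [Ring T] [Nontrivial T]
    [Algebra K T] [Fintype ι] (h2 : (2 : K) ≠ 0) (hι : Even (Fintype.card ι)) {e : ι → T}
    {w : ι → K} (hw : ∀ i, w i ≠ 0)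
    (hsq : ∀ i, e i * e i = algebraMap K T (w i))
    (hanti : ∀ i j, i ≠ j → e i * e j = -(e j * e i)) :
    LinearIndependent K (finsetListProd e) := by
  classical
  let sandwich : ι → Module.End K T := fun j => LinearMap.mulLeftRight K (e j, e j)
  let χ : Finset ι → ι → K := fun I j => (-1) ^ (I.erase j).card * w j
  have hcomm : ∀ i j, Commute (sandwich i) (sandwich j) := by
    intro i j
    rcases eq_or_ne i j with rfl | hij
    · exact Commute.refl _
    · exact commute_mulLeftRight_self (hanti i j hij)
  have heigen : ∀ I j, sandwich j (finsetListProd e I) = χ I j • finsetListProd e I := by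
    intro I j
    simp only [sandwich, χ, LinearMap.mulLeftRight_apply]
    rw [mul_finsetListProd K hanti, smul_mul_assoc, mul_assoc, hsq, mul_smul,
      ← Algebra.commutes, Algebra.smul_def (w j)]
  have hχ : Function.Injective χ := by
    intro I J hIJ
    refine finset_eq_of_even_card_erase_iff hι fun j => ?_
    have hsign := mul_right_cancel₀ (hw j) (congrFun hIJ j)
    have hne : (-1 : K) ≠ 1 := fun h => h2 (by linear_combination -h)
    rw [← neg_one_pow_eq_one_iff_even hne, hsign, neg_one_pow_eq_one_iff_even hne]
  have hunit : ∀ i, IsUnit (e i) := fun i =>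
    (isUnit_pow_iff two_ne_zero).mp <| by
      rw [sq, hsq]
      exact (IsUnit.mk0 _ (hw i)).map _
  have hindep := Module.End.independent_iInf_maxGenEigenspace_of_forall_mapsTo sandwich
    fun i j μ => Module.End.mapsTo_maxGenEigenspace_of_comm (hcomm j i) μ
  refine (hindep.comp hχ).linearIndependent _ (fun I => ?_) (finsetListProd_ne_zero hunit)
  exact Submodule.mem_iInf _ |>.mpr fun j =>
    Module.End.mem_maxGenEigenspace _ _ _ |>.mpr ⟨1, by simp [heigen]⟩

end OrthogonalProducts

section CliffordAlgebras

theorem finrank_cliffordAlgebra {R M : Type*} [CommRing R] [Nontrivial R] [Invertible (2 : R)]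
    [AddCommGroup M] [Module R M] [Module.Free R M] [Module.Finite R M] (Q : QuadraticForm R M) :
    Module.finrank R (CliffordAlgebra Q) = 2 ^ Module.finrank R M := by
  rw [(CliffordAlgebra.equivExterior Q).finrank_eq,
    Module.finrank_eq_card_basis (Module.finBasis R M).ExteriorAlgebra, Fintype.card_finset,
    Fintype.card_fin]

variable {K V ι T : Type*} [Field K] [AddCommGroup V] [Module K V] [Fintype ι] [Ring T]
  [Algebra K T] {Q : QuadraticForm K V} {v : Module.Basis ι K V}

theorem cliffordAlgebra_algHom_injective [Nontrivial T] (h2 : (2 : K) ≠ 0)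
    (hι : Even (Fintype.card ι)) (hortho : ∀ i j, i ≠ j → Q.IsOrtho (v i) (v j))
    (hv : ∀ i, Q (v i) ≠ 0) (φ : CliffordAlgebra Q →ₐ[K] T) : Function.Injective φ := by
  have : Invertible (2 : K) := invertibleOfNonzero h2
  have : Module.Finite K V := .of_basis v
  let e : ι → CliffordAlgebra Q := fun i => CliffordAlgebra.ι Q (v i)
  have hφ : φ ∘ finsetListProd e = finsetListProd (φ ∘ e) := funext fun I => by
    simp only [Function.comp_apply, finsetListProd, map_list_prod, List.map_map]
  have himage : LinearIndependent K (φ.toLinearMap ∘ finsetListProd e) := by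
    rw [AlgHom.coe_toLinearMap, hφ]
    refine linearIndependent_finsetListProd h2 hι hv (fun i => ?_) (fun i j hij => ?_)
    · rw [Function.comp_apply, ← map_mul, CliffordAlgebra.ι_sq_scalar, AlgHom.commutes]
    · simp only [Function.comp_apply, ← map_mul, ← map_neg, e,
        CliffordAlgebra.ι_mul_ι_comm_of_isOrtho (hortho i j hij)]
  refine LinearMap.injective_of_linearIndependent (f := φ.toLinearMap) ?_ himage
  refine himage.of_comp.span_eq_top_of_card_eq_finrank ?_
  rw [finrank_cliffordAlgebra, Module.finrank_eq_card_basis v, Fintype.card_finset]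

theorem cliffordAlgebra_algHom_bijective (h2 : (2 : K) ≠ 0) (hι : Even (Fintype.card ι))
    (hortho : ∀ i j, i ≠ j → Q.IsOrtho (v i) (v j)) (hv : ∀ i, Q (v i) ≠ 0)
    (hT : Module.finrank K T = 2 ^ Fintype.card ι) (φ : CliffordAlgebra Q →ₐ[K] T) :
    Function.Bijective φ := by
  have : Invertible (2 : K) := invertibleOfNonzero h2
  have : Module.Finite K V := .of_basis v
  have hdim : Module.finrank K (CliffordAlgebra Q) = Module.finrank K T := by
    rw [hT, finrank_cliffordAlgebra, Module.finrank_eq_card_basis v]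
  have hpos : 0 < Module.finrank K T := by rw [hT]; positivity
  have : Nontrivial T := Module.nontrivial_of_finrank_pos hpos
  have : Module.Finite K T := Module.finite_of_finrank_pos hpos
  have : Module.Finite K (CliffordAlgebra Q) := Module.finite_of_finrank_pos (hdim ▸ hpos)
  have hinj := cliffordAlgebra_algHom_injective h2 hι hortho hv φ
  exact ⟨hinj, (LinearMap.injective_iff_surjective_of_finrank_eq_finrank
    (f := φ.toLinearMap) hdim).mp hinj⟩

theorem nonempty_cliffordAlgebra_weightedSumSquares_algEquiv (h2 : (2 : K) ≠ 0)
    (hι : Even (Fintype.card ι)) {w : ι → K} (hw : ∀ i, w i ≠ 0)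
    (hT : Module.finrank K T = 2 ^ Fintype.card ι) (f : (ι → K) →ₗ[K] T)
    (hf : ∀ v, f v * f v = algebraMap K T (QuadraticMap.weightedSumSquares K w v)) :
    Nonempty (CliffordAlgebra (QuadraticMap.weightedSumSquares K w) ≃ₐ[K] T) := by
  classical
  refine ⟨.ofBijective (CliffordAlgebra.lift _ ⟨f, hf⟩) <|
    cliffordAlgebra_algHom_bijective (v := Pi.basisFun K ι) h2 hι (fun i j hij => ?_)
      (fun i => ?_) hT _⟩
  · simpa only [Pi.basisFun_apply] using isOrtho_weightedSumSquares_single w hij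
  · simpa [Pi.single_apply] using hw i

end CliffordAlgebras

noncomputable section SquareRootMaps

open scoped TensorProduct

variable {R V W A B : Type*} [CommRing R] [AddCommGroup V] [Module R V] [AddCommGroup W]
  [Module R W] [Ring A] [Algebra R A] [Ring B] [Algebra R B]

/-- The linear map `v ↦ !![x v, y v; z v, -x v]` into `2 × 2` matrices. -/
def tracelessMatrix (x y z : V →ₗ[R] A) : V →ₗ[R] Matrix (Fin 2) (Fin 2) A where
  toFun v := !![x v, y v; z v, -x v]
  map_add' v v' := by simp [neg_add_rev, add_comm]
  map_smul' r v := by simp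

theorem tracelessMatrix_mul_self {x y z : V →ₗ[R] A} {v : V} {α β : R}
    (hxy : Commute (x v) (y v)) (hxz : Commute (x v) (z v))
    (hx : x v * x v = algebraMap R A α) (hyz : y v * z v = algebraMap R A β)
    (hzy : z v * y v = algebraMap R A β) :
    tracelessMatrix x y z v * tracelessMatrix x y z v = algebraMap R _ (α + β) := by
  change !![x v, y v; z v, -x v] * !![x v, y v; z v, -x v] = _
  rw [Matrix.mul_fin_two, hx, hyz, hzy, neg_mul_neg, hx, hxy.eq, ← hxz.eq]
  ext i j
  fin_cases i <;> fin_cases j <;> simp [Matrix.algebraMap_matrix_apply, add_comm]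

/-- A linear map whose squares are the values of `⟨a, b, -ab⟩ ⊥ c⟨1, -a, -b, ab⟩`: a pure
quaternion `p` and a quaternion `x` are sent to the traceless matrix with entries right
multiplication by `p`, left multiplication by `x` and left multiplication by `c * star x`. The first
is on the right so that it commutes with the other two. -/
def pureNormMap (a b c : R) :
    (Fin 3 → R) × (Fin 4 → R) →ₗ[R] Matrix (Fin 2) (Fin 2) (Module.End R ℍ[R,a,b]) :=
  tracelessMatrix
    ((LinearMap.mul R ℍ[R,a,b]).flip ∘ₗ pureQuaternion a b ∘ₗ LinearMap.fst R _ _)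
    (LinearMap.mul R ℍ[R,a,b] ∘ₗ quaternionOfCoords a b ∘ₗ LinearMap.snd R _ _)
    (c • LinearMap.mul R ℍ[R,a,b] ∘ₗ quaternionConj a b ∘ₗ quaternionOfCoords a b ∘ₗ
      LinearMap.snd R _ _)

theorem pureNormMap_mul_self (a b c : R) (v : (Fin 3 → R) × (Fin 4 → R)) :
    pureNormMap a b c v * pureNormMap a b c v = algebraMap R _
      (QuadraticMap.weightedSumSquares R ![a, b, -(a * b)] v.1 +
        c * QuadraticMap.weightedSumSquares R ![1, -a, -b, a * b] v.2) := by
  let p := pureQuaternion a b v.1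
  let x := quaternionOfCoords a b v.2
  have hpp : p * p = _ := pureQuaternion_mul_self a b v.1
  have hxx : x * star x = _ := quaternionOfCoords_mul_star a b v.2
  have hxx' : star x * x = _ := (star_comm_self' x).trans hxx
  refine tracelessMatrix_mul_self (LinearMap.commute_mulLeft_right x p).symm
    ((LinearMap.commute_mulLeft_right (star x) p).symm.smul_right c) ?_ ?_ ?_ <;>
    refine LinearMap.ext fun q => ?_
  · calc q * p * p = q * (p * p) := mul_assoc q p p
      _ = _ := by rw [hpp, ← Algebra.commutes, Module.algebraMap_end_apply, Algebra.smul_def]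
  · calc x * (c • (star x * q)) = c • (x * star x * q) := by rw [mul_smul_comm, mul_assoc]
      _ = _ := by rw [hxx, ← Algebra.smul_def, smul_smul, Module.algebraMap_end_apply]
  · calc c • (star x * (x * q)) = c • (star x * x * q) := by rw [mul_assoc]
      _ = _ := by rw [hxx', ← Algebra.smul_def, smul_smul, Module.algebraMap_end_apply]

/-- If the squares of `f` and `g` are the values of quadratic forms `α` and `β`, then the squares of
this map are the values of `-α ⊥ β`. -/
def tensorDiffMap (f : V →ₗ[R] A) (g : W →ₗ[R] B) :
    V × W →ₗ[R] Matrix (Fin 2) (Fin 2) (A ⊗[R] B) :=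
  let f' : V × W →ₗ[R] A ⊗[R] B :=
    (Algebra.TensorProduct.includeLeft : A →ₐ[R] A ⊗[R] B).toLinearMap ∘ₗ f ∘ₗ LinearMap.fst R V W
  let g' : V × W →ₗ[R] A ⊗[R] B :=
    (Algebra.TensorProduct.includeRight : B →ₐ[R] A ⊗[R] B).toLinearMap ∘ₗ g ∘ₗ LinearMap.snd R V W
  tracelessMatrix g' f' (-f')

theorem tensorDiffMap_mul_self {f : V →ₗ[R] A} {g : W →ₗ[R] B} {v : V × W} {α β : R}
    (hf : f v.1 * f v.1 = algebraMap R A α) (hg : g v.2 * g v.2 = algebraMap R B β) :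
    tensorDiffMap f g v * tensorDiffMap f g v = algebraMap R _ (β - α) := by
  have hf' : (f v.1 ⊗ₜ[R] (1 : B)) * (f v.1 ⊗ₜ 1) = algebraMap R (A ⊗[R] B) α := by
    rw [Algebra.TensorProduct.tmul_mul_tmul, hf, one_mul]
    rfl
  have hg' : ((1 : A) ⊗ₜ[R] g v.2) * (1 ⊗ₜ g v.2) = algebraMap R (A ⊗[R] B) β := by
    rw [Algebra.TensorProduct.tmul_mul_tmul, hg, one_mul,
      Algebra.TensorProduct.algebraMap_apply']
  have hcomm : Commute ((1 : A) ⊗ₜ[R] g v.2) (f v.1 ⊗ₜ (1 : B)) := by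
    simp only [commute_iff_eq, Algebra.TensorProduct.tmul_mul_tmul, one_mul, mul_one]
  rw [sub_eq_add_neg]
  refine tracelessMatrix_mul_self hcomm hcomm.neg_right hg' ?_ ?_
  · exact (mul_neg _ _).trans ((congrArg Neg.neg hf').trans (map_neg _ α).symm)
  · exact (neg_mul _ _).trans ((congrArg Neg.neg hf').trans (map_neg _ α).symm)

end SquareRootMaps

section TenDimensionalForm

variable {R : Type*} [CommRing R]

/-- The diagonal entries of `⟨-a, -b, ab⟩ ⊥ ⟨t₁, t₂, -t₁t₂⟩ ⊥ t₃⟨1, -t₁, -t₂, t₁t₂⟩`. -/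
def tenDimWeights (a b t₁ t₂ t₃ : R) : Fin 10 → R :=
  ![-a, -b, a * b, t₁, t₂, -(t₁ * t₂), t₃, -(t₃ * t₁), -(t₃ * t₂), t₃ * t₁ * t₂]

theorem isSquare_neg_prod_tenDimWeights (a b t₁ t₂ t₃ : R) :
    IsSquare (-∏ i, tenDimWeights a b t₁ t₂ t₃ i) := by
  refine ⟨a * b * (t₁ * t₂) * (t₃ * t₃) * (t₁ * t₂), ?_⟩
  simp only [tenDimWeights, Fin.prod_univ_succ, Fin.prod_univ_zero, Matrix.cons_val_zero,
    Matrix.cons_val_succ]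
  ring

theorem tenDimWeights_ne_zero [NoZeroDivisors R] {a b t₁ t₂ t₃ : R} (ha : a ≠ 0) (hb : b ≠ 0)
    (ht₁ : t₁ ≠ 0) (ht₂ : t₂ ≠ 0) (ht₃ : t₃ ≠ 0) (i : Fin 10) :
    tenDimWeights a b t₁ t₂ t₃ i ≠ 0 := by
  fin_cases i <;> simp [tenDimWeights, *]

theorem comp_tenDimWeights {S : Type*} [CommRing S] (f : R →+* S) (a b t₁ t₂ t₃ : R) :
    f ∘ tenDimWeights a b t₁ t₂ t₃ = tenDimWeights (f a) (f b) (f t₁) (f t₂) (f t₃) := by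
  funext i
  fin_cases i <;> simp [tenDimWeights]

/-- The exponents of `t₁`, `t₂`, `t₃` in each entry of `tenDimWeights a b t₁ t₂ t₃`. -/
def tenDimExponents : Fin 10 → Fin 3 → ℕ :=
  ![![0, 0, 0], ![0, 0, 0], ![0, 0, 0], ![1, 0, 0], ![0, 1, 0], ![1, 1, 0],
    ![0, 0, 1], ![1, 0, 1], ![0, 1, 1], ![1, 1, 1]]

open MvPolynomial in
theorem tenDimWeights_eq_monomial (a b : R) :
    tenDimWeights (C a) (C b) (X 0) (X 1) (X 2) = fun i : Fin 10 =>
      monomial (Finsupp.equivFunOnFinite.symm (tenDimExponents i)) (tenDimWeights a b 1 1 1 i) := by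
  funext i
  rw [monomial_eq, Finsupp.prod_fintype _ _ (by simp), Fin.prod_univ_three]
  fin_cases i <;> simp [tenDimWeights, tenDimExponents, mul_comm, mul_left_comm, mul_assoc]

theorem eq_or_lt_three_of_tenDimExponents_modEq : ∀ i j,
    (∀ x, tenDimExponents i x ≡ tenDimExponents j x [MOD 2]) → i = j ∨ i < 3 := by
  decide

variable [IsDomain R] {a b : R} [IsReduced ℍ[R,a,b]]

theorem tenDimWeights_anisotropic_of_tenDimExponents_modEq {s : Finset (Fin 10)}
    (hs : ∀ i ∈ s, ∀ j ∈ s, ∀ x, tenDimExponents i x ≡ tenDimExponents j x [MOD 2]) :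
    (QuadraticMap.weightedSumSquares R fun i : s => tenDimWeights a b 1 1 1 i).Anisotropic := by
  by_cases hlt : ∀ i ∈ s, i < 3
  · let f : s → Fin 3 := fun i => Fin.castLT i.1 (hlt i i.2)
    have hf : Function.Injective f := fun i j hij =>
      Subtype.ext (Fin.ext (Fin.ext_iff.mp hij :))
    have hw : (fun i : s => tenDimWeights a b 1 1 1 i) = ![-a, -b, a * b] ∘ f :=
      funext fun ⟨i, hi⟩ => by
        have := hlt i hi
        fin_cases i <;> first | rfl | contradiction
    rw [hw]
    exact weightedSumSquares_anisotropic_comp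
      (weightedSumSquares_pureQuaternion_anisotropic a b) hf
  · push Not at hlt
    obtain ⟨i, hi, hi3⟩ := hlt
    have heq : ∀ j ∈ s, i = j := fun j hj =>
      (eq_or_lt_three_of_tenDimExponents_modEq i j (hs i hi j hj)).resolve_right hi3.not_gt
    have : Subsingleton s := ⟨fun j l => Subtype.ext ((heq j j.2).symm.trans (heq l l.2))⟩
    refine weightedSumSquares_anisotropic_of_subsingleton fun j => ?_
    rw [← heq j j.2]
    fin_cases i <;> simp_all [tenDimWeights]

theorem tenDimWeights_X_anisotropic {K : Type*} [Field K] [Algebra (MvPolynomial (Fin 3) R) K]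
    [IsFractionRing (MvPolynomial (Fin 3) R) K] [Algebra R K]
    [IsScalarTower R (MvPolynomial (Fin 3) R) K] :
    (QuadraticMap.weightedSumSquares K (tenDimWeights (algebraMap R K a) (algebraMap R K b)
      (algebraMap (MvPolynomial (Fin 3) R) K (MvPolynomial.X 0))
      (algebraMap (MvPolynomial (Fin 3) R) K (MvPolynomial.X 1))
      (algebraMap (MvPolynomial (Fin 3) R) K (MvPolynomial.X 2)))).Anisotropic := by
  simp only [IsScalarTower.algebraMap_apply R (MvPolynomial (Fin 3) R) K,
    MvPolynomial.algebraMap_eq]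
  rw [← comp_tenDimWeights, tenDimWeights_eq_monomial]
  exact weightedSumSquares_algebraMap_anisotropic <|
    weightedSumSquares_monomial_anisotropic .lex fun s hs =>
      tenDimWeights_anisotropic_of_tenDimExponents_modEq hs

end TenDimensionalForm

noncomputable section TenDimensionalCliffordAlgebra

open scoped TensorProduct

variable {R : Type*} [CommRing R]

/-- The algebra `M₂(ℍ[a, b] ⊗ M₂(End ℍ[t₁, t₂]))`, a model of the Clifford algebra of the form
with diagonal entries `tenDimWeights a b t₁ t₂ t₃`. -/
abbrev TenDimCliffordModel (a b t₁ t₂ : R) :=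
  Matrix (Fin 2) (Fin 2)
    (ℍ[R,a,b] ⊗[R] Matrix (Fin 2) (Fin 2) (Module.End R ℍ[R,t₁,t₂]))

/-- The embedding of the quadratic space with diagonal entries `tenDimWeights a b t₁ t₂ t₃` into its
Clifford algebra, in the model `TenDimCliffordModel`. -/
def tenDimCliffordMap (a b t₁ t₂ t₃ : R) :
    (Fin 10 → R) →ₗ[R] TenDimCliffordModel a b t₁ t₂ :=
  tensorDiffMap (pureQuaternion a b) (pureNormMap t₁ t₂ t₃) ∘ₗ
    (LinearMap.funLeft R R ![0, 1, 2]).prod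
      ((LinearMap.funLeft R R ![3, 4, 5]).prod (LinearMap.funLeft R R ![6, 7, 8, 9]))

theorem tenDimCliffordMap_mul_self (a b t₁ t₂ t₃ : R) (v : Fin 10 → R) :
    tenDimCliffordMap a b t₁ t₂ t₃ v * tenDimCliffordMap a b t₁ t₂ t₃ v = algebraMap R _
      (QuadraticMap.weightedSumSquares R (tenDimWeights a b t₁ t₂ t₃) v) := by
  refine (tensorDiffMap_mul_self (pureQuaternion_mul_self a b _)
    (pureNormMap_mul_self t₁ t₂ t₃ _)).trans (congrArg _ ?_)
  simp only [QuadraticMap.weightedSumSquares_apply, LinearMap.prod_apply, Function.prod_apply,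
    LinearMap.funLeft_apply, Fin.sum_univ_succ, Fin.sum_univ_zero, Matrix.cons_val_zero,
    Matrix.cons_val_succ, Fin.succ_zero_eq_one, Fin.succ_one_eq_two, Fin.reduceSucc,
    smul_eq_mul, tenDimWeights]
  ring

theorem finrank_tenDimCliffordModel [Nontrivial R] (a b t₁ t₂ : R) :
    Module.finrank R (TenDimCliffordModel a b t₁ t₂) = 2 ^ 10 := by
  simp [Module.finrank_matrix, Module.finrank_tensorProduct, Module.finrank_linearMap,
    QuaternionAlgebra.finrank_eq_four]

theorem nonempty_tenDimCliffordModel_algEquiv_matrix (a b t₁ t₂ : R) :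
    Nonempty (TenDimCliffordModel a b t₁ t₂ ≃ₐ[R] Matrix (Fin 16) (Fin 16) ℍ[R,a,b]) := by
  let endEquiv : Module.End R ℍ[R,t₁,t₂] ≃ₐ[R] Matrix (Fin 4) (Fin 4) R :=
    algEquivMatrix (QuaternionAlgebra.basisOneIJK t₁ 0 t₂)
  let splitEquiv : Matrix (Fin 2) (Fin 2) (Module.End R ℍ[R,t₁,t₂]) ≃ₐ[R]
      Matrix (Fin 2 × Fin 4) (Fin 2 × Fin 4) R :=
    endEquiv.mapMatrix.trans (Matrix.compAlgEquiv _ _ _ _)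
  let tensorEquiv : ℍ[R,a,b] ⊗[R] Matrix (Fin 2) (Fin 2) (Module.End R ℍ[R,t₁,t₂]) ≃ₐ[R]
      Matrix (Fin 2 × Fin 4) (Fin 2 × Fin 4) ℍ[R,a,b] :=
    (Algebra.TensorProduct.congr .refl splitEquiv).trans
      (matrixEquivTensor (Fin 2 × Fin 4) R ℍ[R,a,b]).symm
  exact ⟨tensorEquiv.mapMatrix.trans <| (Matrix.compAlgEquiv _ _ _ _).trans <|
    Matrix.reindexAlgEquiv R _ <| Fintype.equivFinOfCardEq rfl⟩

theorem nonempty_cliffordAlgebra_tenDimWeights_algEquiv_matrix {K : Type*} [Field K]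
    (h2 : (2 : K) ≠ 0) {a b t₁ t₂ t₃ : K} (ha : a ≠ 0) (hb : b ≠ 0) (ht₁ : t₁ ≠ 0)
    (ht₂ : t₂ ≠ 0) (ht₃ : t₃ ≠ 0) :
    Nonempty (CliffordAlgebra (QuadraticMap.weightedSumSquares K (tenDimWeights a b t₁ t₂ t₃)) ≃ₐ[K]
      Matrix (Fin 16) (Fin 16) ℍ[K,a,b]) := by
  obtain ⟨modelEquiv⟩ := nonempty_cliffordAlgebra_weightedSumSquares_algEquiv h2 (by decide)
    (tenDimWeights_ne_zero ha hb ht₁ ht₂ ht₃) (finrank_tenDimCliffordModel a b t₁ t₂)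
    (tenDimCliffordMap a b t₁ t₂ t₃) (tenDimCliffordMap_mul_self a b t₁ t₂ t₃)
  exact (nonempty_tenDimCliffordModel_algEquiv_matrix a b t₁ t₂).map modelEquiv.trans

end TenDimensionalCliffordAlgebra

theorem statement6 {k : Type u} [Field k] (h2 : (2 : k) ≠ 0) (a b : k)
    (ha : a ≠ 0) (hb : b ≠ 0)
    -- `Q = (a,b)_k` is a division ring
    (hdiv : ∀ x : ℍ[k, a, b], x ≠ 0 → IsUnit x) :
    -- `K = k(t₁,t₂,t₃)`
    let K := FractionRing (MvPolynomial (Fin 3) k)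
    let t : Fin 3 → K := fun i => algebraMap (MvPolynomial (Fin 3) k) K (MvPolynomial.X i)
    let a' : K := algebraMap k K a
    let b' : K := algebraMap k K b
    -- the diagonal entries `⟨-a, -b, ab, t₁, t₂, -t₁t₂, t₃, -t₃t₁, -t₃t₂, t₃t₁t₂⟩`
    let w : Fin 10 → K :=
      ![-a', -b', a' * b', t 0, t 1, -(t 0 * t 1),
        t 2, -(t 2 * t 0), -(t 2 * t 1), t 2 * t 0 * t 1]
    -- the ten-dimensional diagonal quadratic form `q'` over `K`
    let q' : QuadraticForm K (Fin 10 → K) := QuadraticMap.weightedSumSquares K w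
    -- `q'` is anisotropic
    q'.Anisotropic ∧
    -- `q'` has trivial signed discriminant: `-det(q')` is a square in `K`
    IsSquare (-(∏ i, w i)) ∧
    -- the Clifford algebra `C(q')` is Brauer equivalent to the quaternion algebra `(a,b)_K`
    (∃ r s : ℕ, 0 < r ∧ 0 < s ∧
      Nonempty (Matrix (Fin r) (Fin r) (CliffordAlgebra q') ≃ₐ[K]
        Matrix (Fin s) (Fin s) ℍ[K, a', b'])) := by
  intro K t a' b' w q'
  have h2' : (2 : K) ≠ 0 := map_ofNat (algebraMap k K) 2 ▸ (map_ne_zero _).mpr h2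
  have ha' : a' ≠ 0 := (map_ne_zero _).mpr ha
  have hb' : b' ≠ 0 := (map_ne_zero _).mpr hb
  have ht : ∀ i, t i ≠ 0 := fun i =>
    (map_ne_zero_iff _ (IsFractionRing.injective _ K)).mpr (MvPolynomial.X_ne_zero i)
  have : NoZeroDivisors ℍ[k, a, b] := ⟨fun {x y} hxy => or_iff_not_imp_left.mpr fun hx =>
    (hdiv x hx).mul_right_eq_zero.mp hxy⟩
  obtain ⟨cliffordEquiv⟩ :=
    nonempty_cliffordAlgebra_tenDimWeights_algEquiv_matrix h2' ha' hb' (ht 0) (ht 1) (ht 2)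
  let matrixOneEquiv : Matrix (Fin 1) (Fin 1) (CliffordAlgebra q') ≃ₐ[K]
      Matrix (Fin 16) (Fin 16) ℍ[K, a', b'] :=
    cliffordEquiv.mapMatrix.trans <| (Matrix.compAlgEquiv _ _ _ _).trans <|
      Matrix.reindexAlgEquiv K _ (Equiv.uniqueProd (Fin 16) (Fin 1))
  exact ⟨tenDimWeights_X_anisotropic, isSquare_neg_prod_tenDimWeights a' b' (t 0) (t 1) (t 2),
    1, 16, one_pos, by norm_num, ⟨matrixOneEquiv⟩⟩
end

section
/- Let k be a field and let d, n be positive integers such that d divides n and every prime dividing n divides d (i.e., the squarefree part of n divides d). Then there exists a field extension k ⊆ K and a central division algebra ε over K of degree n (dim_K ε = n²) whose Brauer class has order exactly d in the Brauer group Br(K) — equivalently, the d-fold tensor power ε^{⊗d} over K is split and ε^{⊗m} is not split for 0 < m < d — such that for every finite-dimensional central division algebra D over k, the tensor product D ⊗_k ε (a central simple algebra over K) is a division ring. -/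
/-!
STATEMENT 8: Let `k` be a field and `d ∣ n` positive integers such that every prime
dividing `n` divides `d`.  Then there is a field extension `k ⊆ K` and a central division
algebra `ε` over `K` of degree `n` whose Brauer class has order exactly `d` (the `d`-fold
tensor power of `ε` over `K` is split, and no smaller positive tensor power is split)
such that `D ⊗_k ε` is a division ring for every finite-dimensional central division
algebra `D` over `k`.

The `m`-fold tensor power of `ε` over `K` is formalized as `⨂[K] (_ : Fin m), ε`.
-/

open scoped TensorProduct

universe u

/-!
Write `n` as the product of `m 0 = d` and primes `m 1, …, m r`, all dividing `d`. The product `G` of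
the cyclic groups of these orders acts on the field `E` of rational functions in variables indexed
by `G`, permuted regularly, and fixed variables `t 0, …, t r`. Over `K = E ^ G`, let `ε` be the
crossed product of `E` and `G` by the cocycle `∏ i, t i ^ carry (g i) (h i)`.

The elements `X ^ v * u g` of `ε` form a magma `M`. Adding residues with carry is adding natural
numbers, so `M` has unique products, like the torsion-free abelian groups. Up to denominators from
`K`, `D ⊗ ε` is the magma algebra `D[M]`, hence it has no zero divisors when `D` has none.

By Galois descent, the `e`-fold tensor power of `ε` is a form of a matrix algebra over `E` whose
factor set is the `e`-th power of the cocycle of `ε`, so it splits if and only if this power is a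
coboundary. If it is the coboundary of `β` and `g` generates the `i`-th cyclic group, then `t i ^ e`
is the product of the conjugates of `β g` under this group. Since `t i` is fixed, the degree of this
product in `t i` is a multiple of `m i`, so that `m i ∣ e`. The order of the Brauer class is
therefore the least common multiple `d` of the `m i`.
-/

namespace CrossedProduct

section GaloisDescent

variable {K E G W : Type*} [Field K] [Field E] [Algebra K E] [Group G] [MulSemiringAction G E]
  [AddCommGroup W] [Module K W] [Module E W]

/-- Galois semilinearity: `σ` is an action of `G` on the `E`-space `W` compatible with the action
of `G` on `E`, so that its invariants form a descended `K`-form of `W`. -/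
def IsSemilinear (E : Type*) [Field E] [MulSemiringAction G E] [Module E W]
    (σ : Representation K G W) : Prop :=
  ∀ (g : G) (c : E) (w : W), σ g (c • w) = (g • c) • σ g w

theorem eq_zero_of_forall_sum_mul_smul_eq_zero [FaithfulSMul G E] [Fintype G] {c : G → E}
    (h : ∀ a : E, ∑ g, c g * g • a = 0) (g : G) : c g = 0 := by
  have action_injective : Function.Injective fun g : G ↦
      ((MulSemiringAction.toRingHom G E g : E →+* E) : E →* E) := fun x y hxy ↦
    FaithfulSMul.eq_of_smul_eq_smul (DFunLike.congr_fun hxy)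
  have independent := (linearIndependent_monoidHom E E).comp _ action_injective
  refine Fintype.linearIndependent_iff.1 independent c ?_ g
  ext a
  simpa using h a

variable [Finite G] [IsGaloisGroup G K E] {σ : Representation K G W}

theorem IsSemilinear.span_invariants (hσ : IsSemilinear E σ) :
    Submodule.span E (σ.invariants : Set W) = ⊤ := by
  have := Fintype.ofFinite G
  have := IsGaloisGroup.faithful (G := G) (B := E) K
  rw [Submodule.eq_top_iff']
  intro w
  by_contra hw
  obtain ⟨ℓ, hℓw, hℓ⟩ := Submodule.exists_le_ker_of_notMem hw
  refine hℓw ?_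
  suffices ∀ a, ∑ g : G, ℓ (σ g w) * g • a = 0 by
    simpa using eq_zero_of_forall_sum_mul_smul_eq_zero this 1
  intro a
  have average_mem : ∑ g : G, σ g (a • w) ∈ σ.invariants := fun h ↦ by
    simp only [map_sum, ← Module.End.mul_apply, ← map_mul]
    exact Fintype.sum_equiv (Equiv.mulLeft h) _ _ fun g ↦ rfl
  simpa [hσ _ _ _, mul_comm] using hℓ (Submodule.subset_span average_mem)

variable [IsScalarTower K E W]

theorem IsSemilinear.linearIndependent (hσ : IsSemilinear E σ) {κ : Type*} {v : κ → W}
    (hv : ∀ i, v i ∈ σ.invariants) (hK : LinearIndependent K v) : LinearIndependent E v := by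
  have := Fintype.ofFinite G
  have := IsGaloisGroup.faithful (G := G) (B := E) K
  rw [linearIndependent_iff'] at hK ⊢
  intro s c hc i hi
  suffices ∀ a, ∑ g : G, g • c i * g • a = 0 by
    simpa using eq_zero_of_forall_sum_mul_smul_eq_zero this 1
  intro a
  -- The trace of `c j * a` lies in `K`, so averaging `a • ∑ j, c j • v j = 0` over `G` gives a
  -- relation over `K`.
  have trace_mem (j : κ) : ∃ t : K, algebraMap K E t = ∑ g : G, g • c j * g • a := by
    refine (IsGaloisGroup.isInvariant (G := G)).isInvariant _ fun h ↦ ?_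
    simp only [Finset.smul_sum, smul_mul', smul_smul]
    exact Fintype.sum_equiv (Equiv.mulLeft h) _ _ fun g ↦ rfl
  choose t ht using trace_mem
  have relation : ∑ j ∈ s, t j • v j = 0 := calc
    ∑ j ∈ s, t j • v j = ∑ j ∈ s, ∑ g : G, σ g ((c j * a) • v j) := by
      refine Finset.sum_congr rfl fun j _ ↦ ?_
      simp only [← algebraMap_smul E (t j), ht, Finset.sum_smul, hσ _ _ _, hv j _, smul_mul']
    _ = ∑ g : G, σ g (a • ∑ j ∈ s, c j • v j) := by
      rw [Finset.sum_comm]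
      simp only [Finset.smul_sum, smul_smul, map_sum, mul_comm a]
    _ = 0 := by simp [hc]
  rw [← ht i, hK s t relation i hi, map_zero]

theorem IsSemilinear.finrank_invariants (hσ : IsSemilinear E σ) :
    Module.finrank K σ.invariants = Module.finrank E W := by
  let b := Module.Basis.ofVectorSpace K σ.invariants
  have independentK : LinearIndependent K fun i ↦ (b i : W) :=
    b.linearIndependent.map' σ.invariants.subtype (Submodule.ker_subtype _)
  have independent := hσ.linearIndependent (fun i ↦ (b i).2) independentK
  have spans : ⊤ ≤ Submodule.span E (Set.range fun i ↦ (b i : W)) := by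
    rw [← hσ.span_invariants, Submodule.span_le]
    intro w hw
    have := Submodule.mem_map_of_mem (f := σ.invariants.subtype) (b.mem_span ⟨w, hw⟩)
    rw [Submodule.map_span, ← Set.range_comp] at this
    exact Submodule.span_subset_span K E _ this
  rw [Module.finrank_eq_nat_card_basis b,
    Module.finrank_eq_nat_card_basis (Module.Basis.mk independent spans)]

end GaloisDescent

section Multipliers

variable {E G X Y : Type*} [Field E] [Group G] [MulSemiringAction G E] [MulAction G X]
  [MulAction G Y] {f : G → G → E} {F : G → X → E} {F' : G → Y → E}

/-- A nowhere vanishing family `F` lifting the action of `G` on the set `X` to a projective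
semilinear action on functions `X → E`, with factor set `f`. In particular `IsMultiplier f f` says
that `f` is a 2-cocycle with values in `Eˣ`. -/
structure IsMultiplier (f : G → G → E) (F : G → X → E) : Prop where
  ne_zero : ∀ g x, F g x ≠ 0
  smul_mul : ∀ g h x, g • F h x * F g (h • x) = f g h * F (g * h) x

/-- The factor set `f` is the coboundary of a 1-cochain `β : G → Eˣ`; the latter is a multiplier
on a one-point set. -/
def IsCoboundary (f : G → G → E) : Prop :=
  ∃ β : G → E, IsMultiplier f fun g (_ : Unit) ↦ β g

theorem IsMultiplier.one_apply (hF : IsMultiplier f F) (x : X) : F 1 x = f 1 1 := by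
  have := hF.smul_mul 1 1 x
  rw [one_smul, one_smul, one_mul] at this
  exact mul_right_cancel₀ (hF.ne_zero 1 x) this

theorem IsMultiplier.smul_one_apply (hF : IsMultiplier f F) (g : G) (x : X) :
    g • F 1 x = f g 1 := by
  have := hF.smul_mul g 1 x
  rw [one_smul, mul_one] at this
  exact mul_right_cancel₀ (hF.ne_zero g x) this

theorem IsMultiplier.prod {κ : Type*} [Fintype κ] (hF : IsMultiplier f F) :
    IsMultiplier (fun g h ↦ f g h ^ Fintype.card κ) fun g (x : κ → X) ↦ ∏ j, F g (x j) where
  ne_zero g x := Finset.prod_ne_zero_iff.2 fun j _ ↦ hF.ne_zero g (x j)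
  smul_mul g h x := by
    simp only [Finset.smul_prod', ← Finset.prod_mul_distrib, Pi.smul_apply, hF.smul_mul]
    rw [Finset.prod_mul_distrib, Finset.prod_const, Finset.card_univ]

variable (K : Type*) [Field K] [Algebra K E] [SMulCommClass G K E]

/-- Matrices commuting with the projective semilinear actions of `G` on `Y → E` and `X → E`
defined by `F'` and `F`. -/
def intertwiners (F : G → X → E) (F' : G → Y → E) : Submodule K (Matrix X Y E) where
  carrier := {M | ∀ g x y, M (g • x) (g • y) * F g x = F' g y * g • M x y}
  zero_mem' := by simp
  add_mem' hM hN g x y := by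
    rw [Matrix.add_apply, Matrix.add_apply, add_mul, smul_add, mul_add, hM, hN]
  smul_mem' c M hM g x y := by
    rw [Matrix.smul_apply, Matrix.smul_apply, smul_mul_assoc, hM, smul_comm g c (M x y),
      mul_smul_comm c]

variable {K}

theorem mem_intertwiners {M : Matrix X Y E} : M ∈ intertwiners K F F' ↔
    ∀ g x y, M (g • x) (g • y) * F g x = F' g y * g • M x y :=
  Iff.rfl

theorem mul_mem_intertwiners {Z : Type*} [MulAction G Z] [Fintype Y] {F'' : G → Z → E}
    {M : Matrix X Y E} {N : Matrix Y Z E} (hM : M ∈ intertwiners K F F')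
    (hN : N ∈ intertwiners K F' F'') : M * N ∈ intertwiners K F F'' := by
  intro g x z
  simp only [Matrix.mul_apply, Finset.smul_sum, Finset.sum_mul, Finset.mul_sum, smul_mul']
  rw [← Fintype.sum_equiv (MulAction.toPerm g) _ _ fun y ↦ rfl]
  refine Finset.sum_congr rfl fun y _ ↦ ?_
  simp only [MulAction.toPerm_apply]
  linear_combination N (g • y) (g • z) * hM g x y + g • M x y * hN g y z

/-- The semilinear action of `G` on matrices whose invariants are the intertwiners. -/
def IsMultiplier.conjugation (K : Type*) [Field K] [Algebra K E] [SMulCommClass G K E]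
    (hF : IsMultiplier f F) (hF' : IsMultiplier f F') : Representation K G (Matrix X Y E) where
  toFun g :=
    { toFun M := .of fun x y ↦
        F' g (g⁻¹ • y) / F g (g⁻¹ • x) * g • M (g⁻¹ • x) (g⁻¹ • y)
      map_add' M N := by ext x y; simp [mul_add]
      map_smul' c M := by ext x y; simp [smul_comm g c] }
  map_one' := by
    ext M x y
    have : f 1 1 ≠ 0 := hF.one_apply x ▸ hF.ne_zero 1 x
    simp [hF.one_apply, hF'.one_apply, this]
  map_mul' g h := by
    ext M x y
    obtain ⟨x, rfl⟩ := MulAction.surjective (g * h) x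
    obtain ⟨y, rfl⟩ := MulAction.surjective (g * h) y
    have := hF.ne_zero g (h • x)
    have := hF.ne_zero (g * h) x
    have : g • F h x ≠ 0 := (smul_ne_zero_iff_ne g).2 (hF.ne_zero h x)
    have ratio_mul : F' (g * h) y / F (g * h) x =
        F' g (h • y) / F g (h • x) * (g • F' h y / g • F h x) := by
      field_simp
      linear_combination F' (g * h) y * hF.smul_mul g h x - F (g * h) x * hF'.smul_mul g h y
    simp [ratio_mul, smul_div₀', smul_smul, mul_assoc]

theorem IsMultiplier.isSemilinear_conjugation (hF : IsMultiplier f F) (hF' : IsMultiplier f F') :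
    IsSemilinear E (hF.conjugation K hF') := fun g c M ↦ by
  ext x y
  simp [conjugation, mul_left_comm]

theorem IsMultiplier.invariants_conjugation (hF : IsMultiplier f F) (hF' : IsMultiplier f F') :
    (hF.conjugation K hF').invariants = intertwiners K F F' := by
  ext M
  rw [Representation.mem_invariants, mem_intertwiners]
  refine forall_congr' fun g ↦ ?_
  rw [← Matrix.ext_iff, (MulAction.bijective g).surjective.forall]
  refine forall_congr' fun x ↦ ?_
  rw [(MulAction.bijective g).surjective.forall]
  refine forall_congr' fun y ↦ ?_
  have := hF.ne_zero g x
  simp [conjugation, div_mul_eq_mul_div, div_eq_iff this, eq_comm]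

variable [Finite G] [IsGaloisGroup G K E]

theorem IsMultiplier.span_intertwiners (hF : IsMultiplier f F) (hF' : IsMultiplier f F') :
    Submodule.span E (intertwiners K F F' : Set (Matrix X Y E)) = ⊤ := by
  rw [← hF.invariants_conjugation hF']
  exact (hF.isSemilinear_conjugation hF').span_invariants

theorem IsMultiplier.eq_top_of_intertwiners_subset (hF : IsMultiplier f F)
    (hF' : IsMultiplier f F') {V : Submodule E (Matrix X Y E)}
    (h : (intertwiners K F F' : Set (Matrix X Y E)) ⊆ V) : V = ⊤ :=
  top_le_iff.1 (hF.span_intertwiners (K := K) hF' ▸ Submodule.span_le.2 h)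

theorem IsMultiplier.linearIndependent_intertwiners (hF : IsMultiplier f F)
    (hF' : IsMultiplier f F') {κ : Type*} {v : κ → intertwiners K F F'}
    (hv : LinearIndependent K v) : LinearIndependent E fun i ↦ (v i : Matrix X Y E) := by
  refine (hF.isSemilinear_conjugation (K := K) hF').linearIndependent (fun i ↦ ?_)
    (hv.map' (Submodule.subtype _) (Submodule.ker_subtype _))
  rw [hF.invariants_conjugation hF']
  exact (v i).2

theorem IsMultiplier.finrank_intertwiners [Fintype X] [Fintype Y] (hF : IsMultiplier f F)
    (hF' : IsMultiplier f F') :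
    Module.finrank K (intertwiners K F F') = Fintype.card X * Fintype.card Y := by
  rw [← hF.invariants_conjugation hF', (hF.isSemilinear_conjugation hF').finrank_invariants,
    Module.finrank_matrix, Module.finrank_self, mul_one]

theorem IsMultiplier.finite_intertwiners [Finite X] [Finite Y] (hF : IsMultiplier f F)
    (hF' : IsMultiplier f F') : Module.Finite K (intertwiners K F F') := by
  have independent := hF.linearIndependent_intertwiners hF'
    (Module.Basis.ofVectorSpace K (intertwiners K F F')).linearIndependent
  have := independent.finite
  exact .of_basis (Module.Basis.ofVectorSpace K (intertwiners K F F'))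

end Multipliers

section TwistedMatrix

variable {K E G X : Type*} [Field K] [Field E] [Algebra K E] [Group G] [MulSemiringAction G E]
  [MulAction G X] [Fintype X] [DecidableEq X] {f : G → G → E} {F : G → X → E}

/-- The `K`-form of the matrix algebra over `E` cut out by the projective action of `G` given
by `F`. For `F = f` a 2-cocycle this is the crossed product algebra of `f`, acting on itself. -/
def twistedMatrix (K : Type*) [Field K] [Algebra K E] [SMulCommClass G K E] (F : G → X → E) :
    Subalgebra K (Matrix X X E) where
  __ := intertwiners K F F
  mul_mem' := mul_mem_intertwiners
  algebraMap_mem' c g x y := by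
    obtain rfl | hxy := eq_or_ne x y
    · simp [Matrix.algebraMap_matrix_apply, mul_comm]
    · simp [Matrix.algebraMap_matrix_apply, hxy]

variable [Finite G] [IsGaloisGroup G K E]

theorem IsMultiplier.finrank_twistedMatrix (hF : IsMultiplier f F) :
    Module.finrank K (twistedMatrix K F) = Fintype.card X ^ 2 :=
  (hF.finrank_intertwiners hF).trans (sq _).symm

theorem IsMultiplier.finite_twistedMatrix (hF : IsMultiplier f F) :
    Module.Finite K (twistedMatrix K F) :=
  hF.finite_intertwiners hF

theorem IsMultiplier.isCentral_twistedMatrix [Nonempty X] (hF : IsMultiplier f F) :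
    Algebra.IsCentral K (twistedMatrix K F) where
  out := by
    rintro ⟨M, hM⟩ hcenter
    rw [Subalgebra.mem_center_iff] at hcenter
    have commutator_eq_zero :
        LinearMap.ker (LinearMap.mulRight E M - LinearMap.mulLeft E M) = ⊤ :=
      hF.eq_top_of_intertwiners_subset (K := K) hF fun N hN ↦
        sub_eq_zero.2 congr($(hcenter ⟨N, hN⟩))
    have commutes (N : Matrix X X E) : N * M = M * N :=
      sub_eq_zero.1 (commutator_eq_zero.ge (Submodule.mem_top (x := N)))
    obtain ⟨c, rfl⟩ := (Algebra.IsCentral.mem_center_iff E).1 (Subalgebra.mem_center_iff.2 commutes)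
    have x : X := Classical.arbitrary X
    have fixed (g : G) : g • c = c := by
      have := hM g x x
      simp only [Matrix.algebraMap_matrix_apply, if_true, Algebra.algebraMap_self, RingHom.id_apply,
        mul_comm c] at this
      exact (mul_left_cancel₀ (hF.ne_zero g x) this).symm
    obtain ⟨a, rfl⟩ := (IsGaloisGroup.isInvariant (A := K)).isInvariant c fixed
    exact ⟨a, Subtype.ext (IsScalarTower.algebraMap_apply K E (Matrix X X E) a)⟩

end TwistedMatrix

section Splitting

theorem bijective_of_injective_of_finrank_eq {K A B : Type*} [Field K] [Semiring A] [Semiring B]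
    [Algebra K A] [Algebra K B] [Module.Finite K A] [Module.Finite K B] (φ : A →ₐ[K] B)
    (hφ : Function.Injective φ) (h : Module.finrank K A = Module.finrank K B) :
    Function.Bijective φ := by
  let _ := Module.addCommMonoidToAddCommGroup K (M := A)
  let _ := Module.addCommMonoidToAddCommGroup K (M := B)
  have surjective_iff :=
    LinearMap.injective_iff_surjective_of_finrank_eq_finrank h (f := φ.toLinearMap)
  exact ⟨hφ, surjective_iff.1 hφ⟩

theorem IsMultiplier.isCoboundary_of_eigenvector {E G X : Type*} [Field E] [Group G]
    [MulSemiringAction G E] [MulAction G X] {f : G → G → E} {F : G → X → E}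
    (hF : IsMultiplier f F) {β : G → E} {w : X → E} (hβ : ∀ g, β g ≠ 0)
    (hw : ∀ g x, w (g • x) * F g x = β g * g • w x) {x : X} (hx : w x ≠ 0) :
    IsCoboundary f := by
  refine ⟨β, fun g _ ↦ hβ g, fun g h _ ↦ ?_⟩
  refine mul_right_cancel₀ ((smul_ne_zero_iff_ne (g * h)).2 hx) ?_
  have hgh := hw (g * h) x
  have hh := congr(g • $(hw h x))
  simp only [smul_mul', ← mul_smul] at hh hgh
  have hg := hw g (h • x)
  rw [← mul_smul] at hg
  linear_combination w ((g * h) • x) * hF.smul_mul g h x + f g h * hgh - β g * hh -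
    g • F h x * hg

variable {K E G X Y : Type*} [Field K] [Field E] [Algebra K E] [Group G] [MulSemiringAction G E]
  [MulAction G X] [MulAction G Y] [Fintype X] [DecidableEq X] {f : G → G → E} {F : G → X → E}
  {F' : G → Y → E}

/-- The twisted matrix algebra of `F` acts on intertwiners by left multiplication. -/
def mulLeftIntertwiners (K : Type*) [Field K] [Algebra K E] [SMulCommClass G K E]
    (F : G → X → E) (F' : G → Y → E) :
    twistedMatrix K F →ₐ[K] Module.End K (intertwiners K F F') :=
  .ofLinearMap
    (LinearMap.mk₂ K (fun M N ↦ ⟨M.1 * N.1, mul_mem_intertwiners M.2 N.2⟩)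
      (fun M M' N ↦ Subtype.ext (Matrix.add_mul M.1 M'.1 N.1))
      (fun c M N ↦ Subtype.ext (Matrix.smul_mul c M.1 N.1))
      (fun M N N' ↦ Subtype.ext (Matrix.mul_add M.1 N.1 N'.1))
      (fun c M N ↦ Subtype.ext (Matrix.mul_smul M.1 c N.1)))
    (by ext N : 2; exact Matrix.one_mul N.1)
    (fun M M' ↦ by ext N : 2; exact Matrix.mul_assoc M.1 M'.1 N.1)

variable [Finite G] [IsGaloisGroup G K E]

theorem IsMultiplier.mulLeftIntertwiners_injective [Nonempty Y] (hF : IsMultiplier f F)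
    (hF' : IsMultiplier f F') : Function.Injective (mulLeftIntertwiners K F F') := by
  rw [injective_iff_map_eq_zero]
  intro M hM
  have ker_eq_top : LinearMap.ker (mulLeftLinearMap Y E M.1) = ⊤ :=
    hF.eq_top_of_intertwiners_subset (K := K) hF' fun N hN ↦
      congr(($(LinearMap.congr_fun hM ⟨N, hN⟩)).1)
  have annihilates (N : Matrix X Y E) : M.1 * N = 0 := ker_eq_top.ge (Submodule.mem_top (x := N))
  ext x x'
  have y : Y := Classical.arbitrary Y
  classical simpa using congr($(annihilates (.single x' y 1)) x y)

theorem IsMultiplier.nonempty_algEquiv_matrix [Nonempty X] (hF : IsMultiplier f F)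
    (hf : IsCoboundary f) :
    Nonempty (twistedMatrix K F ≃ₐ[K] Matrix (Fin (Fintype.card X)) (Fin (Fintype.card X)) K) := by
  obtain ⟨β, hβ⟩ := hf
  have := hF.finite_twistedMatrix (K := K)
  have := hF.finite_intertwiners (K := K) hβ
  have finrank_eq : Module.finrank K (intertwiners K F fun g (_ : Unit) ↦ β g) =
      Fintype.card X := by
    rw [hF.finrank_intertwiners hβ, Fintype.card_unit, mul_one]
  let ρ := mulLeftIntertwiners K F fun g (_ : Unit) ↦ β g
  have same_finrank : Module.finrank K (twistedMatrix K F) =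
      Module.finrank K (Module.End K (intertwiners K F fun g (_ : Unit) ↦ β g)) := by
    rw [hF.finrank_twistedMatrix, Module.finrank_linearMap, finrank_eq, sq]
  have ρ_bijective :=
    bijective_of_injective_of_finrank_eq ρ (hF.mulLeftIntertwiners_injective hβ) same_finrank
  exact ⟨(AlgEquiv.ofBijective ρ ρ_bijective).trans
    (algEquivMatrix (Module.finBasisOfFinrankEq K _ finrank_eq))⟩

theorem IsMultiplier.exists_mul_mul_eq_smul (hF : IsMultiplier f F) {e : Matrix X X E}
    (he : ∀ M ∈ twistedMatrix K F, ∃ c : E, e * M * e = c • e) (M : Matrix X X E) :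
    ∃ c : E, e * M * e = c • e := by
  have corner_eq_top :
      (E ∙ e).comap (LinearMap.mulRight E e ∘ₗ LinearMap.mulLeft E e) = ⊤ :=
    hF.eq_top_of_intertwiners_subset (K := K) hF fun M hM ↦ by
      obtain ⟨c, hc⟩ := he M hM
      exact Submodule.mem_span_singleton.2 ⟨c, hc.symm⟩
  obtain ⟨c, hc⟩ := Submodule.mem_span_singleton.1
    (corner_eq_top.ge (Submodule.mem_top (x := M)))
  exact ⟨c, hc.symm⟩

theorem exists_apply_eq_mul_of_forall_mul_mul_eq_smul {E X : Type*} [Field E] [Fintype X]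
    {e : Matrix X X E} (he : ∀ M : Matrix X X E, ∃ c : E, e * M * e = c • e)
    {x₀ y₀ : X} (h₀ : e x₀ y₀ ≠ 0) : ∃ b : X → E, ∀ x y, e x y = b y * e x y₀ := by
  classical
  choose c hc using fun y ↦ he (.single y x₀ 1)
  refine ⟨fun y ↦ c y / e x₀ y₀, fun x y ↦ ?_⟩
  have entry : (e * .single y x₀ 1 * e : Matrix X X E) x y₀ = e x y * e x₀ y₀ := by
    simp [Matrix.mul_apply, Matrix.single_apply, ite_and]
  rw [div_mul_eq_mul_div, eq_div_iff h₀, ← entry, hc, Matrix.smul_apply, smul_eq_mul]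

theorem IsMultiplier.isCoboundary_of_forall_mul_mul_eq_smul (hF : IsMultiplier f F)
    {e : Matrix X X E} (e_mem : e ∈ twistedMatrix K F) (e_ne_zero : e ≠ 0)
    (he : ∀ M ∈ twistedMatrix K F, ∃ c : E, e * M * e = c • e) : IsCoboundary f := by
  obtain ⟨x₀, y₀, h₀⟩ : ∃ x y, e x y ≠ 0 := by
    contrapose! e_ne_zero
    exact Matrix.ext e_ne_zero
  obtain ⟨b, hb⟩ :=
    exists_apply_eq_mul_of_forall_mul_mul_eq_smul (hF.exists_mul_mul_eq_smul he) h₀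
  have twist (g : G) (x : X) : b (g • y₀) * (e (g • x) y₀ * F g x) = F g y₀ * g • e x y₀ := by
    rw [← mul_assoc, ← hb, e_mem g x y₀]
  have b_ne_zero (g : G) : b (g • y₀) ≠ 0 := by
    refine left_ne_zero_of_mul ((twist g x₀).trans_ne (mul_ne_zero (hF.ne_zero g y₀) ?_))
    exact (smul_ne_zero_iff_ne g).2 h₀
  refine hF.isCoboundary_of_eigenvector (β := fun g ↦ F g y₀ / b (g • y₀))
    (w := fun x ↦ e x y₀) (fun g ↦ div_ne_zero (hF.ne_zero g y₀) (b_ne_zero g)) (fun g x ↦ ?_) h₀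
  rw [div_mul_eq_mul_div, eq_div_iff (b_ne_zero g), ← twist, mul_comm]

theorem IsMultiplier.isCoboundary_of_algEquiv_matrix [Nonempty X] (hF : IsMultiplier f F)
    {ι : Type*} [Fintype ι] [DecidableEq ι] (φ : twistedMatrix K F ≃ₐ[K] Matrix ι ι K) :
    IsCoboundary f := by
  have : Nonempty ι := by
    by_contra h
    rw [not_nonempty_iff] at h
    exact not_subsingleton _ φ.injective.subsingleton
  let i : ι := Classical.arbitrary ι
  let e : twistedMatrix K F := φ.symm (.single i i 1)
  have e_ne_zero : e ≠ 0 := by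
    have : (.single i i 1 : Matrix ι ι K) ≠ 0 := fun h ↦ by simpa using congr($h i i)
    simpa [e] using this
  refine hF.isCoboundary_of_forall_mul_mul_eq_smul e.2 (Subtype.coe_ne_coe.2 e_ne_zero)
    fun M hM ↦ ⟨algebraMap K E (φ ⟨M, hM⟩ i i), ?_⟩
  have corner : e * ⟨M, hM⟩ * e = φ ⟨M, hM⟩ i i • e := φ.injective (by simp [e])
  rw [algebraMap_smul]
  exact congr(($corner).1)

end Splitting

section TensorPower

theorem linearIndependent_prod_apply {E ι κ S : Type*} [Field E] [Fintype κ] [Finite S]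
    {v : ι → S → E} (hv : LinearIndependent E v) :
    LinearIndependent E fun (i : κ → ι) (s : κ → S) ↦ ∏ j, v (i j) (s j) := by
  classical
  have := Fintype.ofFinite S
  have := hv.finite
  obtain ⟨ℓ, hℓ⟩ := LinearMap.exists_leftInverse_of_injective (Finsupp.linearCombination E v)
    (LinearMap.ker_eq_bot.2 (linearIndependent_iff_injective_finsuppLinearCombination.1 hv))
  -- The coordinates of `ℓ` are dual to `v`, so their products are dual to the products of `v`.
  let C : Matrix (κ → ι) (κ → S) E := .of fun i s ↦ ∏ j, ℓ (Pi.single (s j) 1) (i j)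
  have dual (i i' : ι) : ∑ s, ℓ (Pi.single s 1) i * v i' s = Pi.single (M := fun _ ↦ E) i' 1 i := by
    have expand : ∑ s, v i' s • Pi.single (M := fun _ ↦ E) s 1 = v i' :=
      (pi_eq_sum_univ' (v i')).symm
    calc ∑ s, ℓ (Pi.single s 1) i * v i' s
      _ = ℓ (∑ s, v i' s • Pi.single s 1) i := by
        simp [Finsupp.finsetSum_apply, mul_comm]
      _ = Pi.single (M := fun _ ↦ E) i' 1 i := by
        have := LinearMap.congr_fun hℓ (Finsupp.single i' 1)
        rw [LinearMap.comp_apply, Finsupp.linearCombination_single, one_smul] at this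
        rw [expand, this, LinearMap.id_apply, Finsupp.single_eq_pi_single]
  refine LinearIndependent.of_comp C.mulVecLin ?_
  convert Pi.linearIndependent_single_one (κ → ι) E with i
  ext i'
  calc ∑ s : κ → S, (∏ j, ℓ (Pi.single (s j) 1) (i' j)) * ∏ j, v (i j) (s j)
    _ = ∏ j, ∑ s, ℓ (Pi.single s 1) (i' j) * v (i j) s := by
      simp only [← Finset.prod_mul_distrib, Fintype.piFinset_univ, Finset.prod_univ_sum]
    _ = Pi.single (M := fun _ ↦ E) i 1 i' := by
      simp only [dual, Pi.single_apply, Fintype.prod_ite_zero, funext_iff, Finset.prod_const_one]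

theorem injective_of_linearIndependent_comp {K V W ι : Type*} [Field K] [AddCommMonoid V]
    [AddCommMonoid W] [Module K V] [Module K W] (b : Module.Basis ι K V) (φ : V →ₗ[K] W)
    (h : LinearIndependent K (φ ∘ b)) : Function.Injective φ := by
  have factor : ⇑φ = Finsupp.linearCombination K (φ ∘ b) ∘ b.repr := by
    ext v
    rw [Function.comp_apply, ← Finsupp.apply_linearCombination, b.linearCombination_repr]
  rw [factor]
  exact (linearIndependent_iff_injective_finsuppLinearCombination.1 h).comp b.repr.injective

variable {K E G X : Type*} [Field K] [Field E] [Algebra K E] [Group G] [MulSemiringAction G E]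
  [MulAction G X] [Fintype X] [DecidableEq X] {f : G → G → E} {F : G → X → E}
  {κ : Type*} [Fintype κ] [DecidableEq κ]

/-- The Kronecker product of a family of matrices from the twisted matrix algebra of `F`, as a
homomorphism from its tensor power. -/
noncomputable def kronecker (K : Type*) [Field K] [Algebra K E] [SMulCommClass G K E]
    (F : G → X → E) (κ : Type*) [Fintype κ] [DecidableEq κ] :
    (⨂[K] (_ : κ), twistedMatrix K F) →ₐ[K] Matrix (κ → X) (κ → X) E :=
  PiTensorProduct.liftAlgHom
    ((Matrix.ofLinearEquiv K).toLinearMap.compMultilinearMap <| .pi fun x ↦ .pi fun y ↦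
      (MultilinearMap.mkPiAlgebra K κ E).compLinearMap fun j ↦
        Matrix.entryLinearMap K E (x j) (y j) ∘ₗ (twistedMatrix K F).val.toLinearMap)
    (by
      ext x y
      simp [Matrix.one_apply, Fintype.prod_ite_zero, funext_iff])
    (fun M N ↦ by
      ext x z
      simp [Matrix.mul_apply, ← Finset.prod_mul_distrib, Finset.prod_univ_sum])

theorem kronecker_tprod_apply [SMulCommClass G K E] (M : κ → twistedMatrix K F) (x y : κ → X) :
    kronecker K F κ (PiTensorProduct.tprod K M) x y = ∏ j, (M j).1 (x j) (y j) := by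
  simp [kronecker, PiTensorProduct.liftAlgHom_apply]

theorem kronecker_mem [SMulCommClass G K E] (z : ⨂[K] (_ : κ), twistedMatrix K F) :
    kronecker K F κ z ∈ twistedMatrix K fun g (x : κ → X) ↦ ∏ j, F g (x j) := by
  induction z using PiTensorProduct.induction_on with
  | smul_tprod r M =>
    rw [map_smul]
    refine Subalgebra.smul_mem _ (fun g x y ↦ ?_) r
    simp only [kronecker_tprod_apply, Finset.smul_prod', ← Finset.prod_mul_distrib]
    exact Finset.prod_congr rfl fun j _ ↦ (M j).2 g (x j) (y j)
  | add a b ha hb =>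
    rw [map_add]
    exact Subalgebra.add_mem _ ha hb

variable [Finite G] [IsGaloisGroup G K E]

theorem IsMultiplier.kronecker_injective (hF : IsMultiplier f F) :
    Function.Injective (kronecker K F κ) := by
  have := hF.finite_twistedMatrix (K := K)
  let b := Module.finBasis K (twistedMatrix K F)
  have independent : LinearIndependent E fun i ↦ Function.uncurry (b i).1 :=
    (hF.linearIndependent_intertwiners hF b.linearIndependent).map'
      (LinearEquiv.curry E E X X).symm.toLinearMap (LinearEquiv.ker _)
  let entries : Matrix (κ → X) (κ → X) E →ₗ[K] (κ → X × X) → E :=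
    { toFun M s := M (fun j ↦ (s j).1) fun j ↦ (s j).2
      map_add' _ _ := rfl
      map_smul' _ _ := rfl }
  refine injective_of_linearIndependent_comp (Basis.piTensorProduct fun _ ↦ b)
    (kronecker K F κ).toLinearMap (LinearIndependent.of_comp entries ?_)
  convert (linearIndependent_prod_apply (κ := κ) independent).restrict_scalars' K using 1
  ext i s
  simp only [Function.comp_apply, AlgHom.toLinearMap_apply, Basis.piTensorProduct_apply]
  exact kronecker_tprod_apply _ _ _

theorem IsMultiplier.nonempty_tensorPower_algEquiv (hF : IsMultiplier f F) :
    Nonempty ((⨂[K] (_ : κ), twistedMatrix K F) ≃ₐ[K]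
      twistedMatrix K fun g (x : κ → X) ↦ ∏ j, F g (x j)) := by
  have := hF.finite_twistedMatrix (K := K)
  have := (hF.prod (κ := κ)).finite_twistedMatrix (K := K)
  let b := Module.finBasis K (twistedMatrix K F)
  have finrank_eq : Module.finrank K (⨂[K] (_ : κ), twistedMatrix K F) =
      Module.finrank K (twistedMatrix K fun g (x : κ → X) ↦ ∏ j, F g (x j)) := by
    rw [hF.prod.finrank_twistedMatrix,
      Module.finrank_eq_card_basis (Basis.piTensorProduct fun _ : κ ↦ b)]
    simp [hF.finrank_twistedMatrix, ← pow_mul, mul_comm]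
  let φ := (kronecker K F κ).codRestrict _ kronecker_mem
  have := Module.Finite.of_basis (Basis.piTensorProduct fun _ : κ ↦ b)
  exact ⟨.ofBijective φ <| bijective_of_injective_of_finrank_eq φ
    (fun _ _ h ↦ hF.kronecker_injective congr(($h).1)) finrank_eq⟩

end TensorPower

section DomainCriterion

variable {k K ε D M : Type*} [CommRing k] [Ring ε] [Algebra k ε] [Ring D] [Algebra k D]

/-- The comparison map `D[M] → ε ⊗ D` extending a map `e : M → ε`. It is multiplicative when `e`
is, although `M` need not be a monoid. -/
noncomputable def monoidAlgebraToTensor (k D : Type*) [CommRing k] [Algebra k ε] [Ring D]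
    [Algebra k D] (e : M → ε) : MonoidAlgebra D M →+ ε ⊗[k] D :=
  MonoidAlgebra.liftNC
    ((Algebra.TensorProduct.includeRight : D →ₐ[k] ε ⊗[k] D).toRingHom : D →+ ε ⊗[k] D)
    fun x ↦ e x ⊗ₜ 1

theorem monoidAlgebraToTensor_mul [Mul M] (e : M →ₙ* ε) (p q : MonoidAlgebra D M) :
    monoidAlgebraToTensor k D e (p * q) =
      monoidAlgebraToTensor k D e p * monoidAlgebraToTensor k D e q :=
  MonoidAlgebra.liftNC_mul (Algebra.TensorProduct.includeRight : D →ₐ[k] ε ⊗[k] D).toRingHom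
    (⟨fun x ↦ e x ⊗ₜ 1, fun x y ↦ by simp⟩ : M →ₙ* ε ⊗[k] D) p q
    fun _ ↦ by simp [Commute, SemiconjBy]

theorem monoidAlgebraToTensor_eq_rTensor [DecidableEq M] (e : M → ε) (p : MonoidAlgebra D M) :
    monoidAlgebraToTensor k D e p = (Finsupp.linearCombination k e).rTensor D
      ((TensorProduct.finsuppScalarLeft k D M).symm p.coeff) := by
  induction p using MonoidAlgebra.induction_linear with
  | zero => simp
  | add p q hp hq => rw [map_add, hp, hq, MonoidAlgebra.coeff_add, map_add, map_add]
  | single x a => simp [monoidAlgebraToTensor]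

theorem monoidAlgebraToTensor_injective [Module.Flat k D] {e : M → ε}
    (he : LinearIndependent k e) : Function.Injective (monoidAlgebraToTensor k D e) := by
  classical
  have := Module.Flat.rTensor_preserves_injective_linearMap (M := D) _
    (linearIndependent_iff_injective_finsuppLinearCombination.1 he)
  rw [funext (monoidAlgebraToTensor_eq_rTensor e)]
  exact (this.comp (LinearEquiv.injective _)).comp MonoidAlgebra.coeff_injective

theorem tmul_mem_range_monoidAlgebraToTensor {e : M → ε} {z : ε}
    (hz : z ∈ Submodule.span k (Set.range e)) (a : D) :
    z ⊗ₜ a ∈ (monoidAlgebraToTensor k D e).range := by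
  classical
  obtain ⟨c, rfl⟩ := Finsupp.mem_span_range_iff_exists_finsupp.1 hz
  refine ⟨.ofCoeff (TensorProduct.finsuppScalarLeft k D M (c ⊗ₜ a)), ?_⟩
  rw [monoidAlgebraToTensor_eq_rTensor, MonoidAlgebra.coeff_ofCoeff, LinearEquiv.symm_apply_apply]
  rfl

variable [Field K] [Algebra k K] [Algebra K ε] [IsScalarTower k K ε]

/-- The map `e : M → ε` generates the `K`-algebra `ε` up to denominators: finitely many elements
of `ε` have a common denominator in `K` relative to the `k`-span of `e`. -/
def HasCommonDenominators (k K : Type*) [CommRing k] [Field K] [Algebra k ε] [Algebra K ε]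
    (e : M → ε) : Prop :=
  ∀ S : Finset ε, ∃ s : K, s ≠ 0 ∧ ∀ z ∈ S, s • z ∈ Submodule.span k (Set.range e)

theorem HasCommonDenominators.exists_smul_mem_range {e : M → ε}
    (he : HasCommonDenominators k K e) (x : ε ⊗[k] D) :
    ∃ s : K, s ≠ 0 ∧ s • x ∈ (monoidAlgebraToTensor k D e).range := by
  classical
  obtain ⟨S, rfl⟩ := TensorProduct.exists_finset x
  obtain ⟨s, hs, h⟩ := he (S.image Prod.fst)
  refine ⟨s, hs, ?_⟩
  rw [Finset.smul_sum]
  refine AddSubgroup.sum_mem _ fun i hi ↦ ?_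
  rw [TensorProduct.smul_tmul']
  exact tmul_mem_range_monoidAlgebraToTensor (h _ (Finset.mem_image_of_mem _ hi)) _

theorem HasCommonDenominators.noZeroDivisors_tensorProduct [Mul M] [UniqueProds M]
    [NoZeroDivisors D] [Module.Flat k D] {e : M →ₙ* ε} (he : HasCommonDenominators k K e)
    (independent : LinearIndependent k e) : NoZeroDivisors (D ⊗[k] ε) := by
  suffices NoZeroDivisors (ε ⊗[k] D) from
    (Algebra.TensorProduct.comm k D ε).injective.noZeroDivisors _ (map_zero _) (map_mul _)
  refine ⟨fun {x y} hxy ↦ ?_⟩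
  obtain ⟨s, hs, p, hp⟩ := he.exists_smul_mem_range x
  obtain ⟨t, ht, q, hq⟩ := he.exists_smul_mem_range y
  have mul_eq_zero_lift : p * q = 0 := by
    refine monoidAlgebraToTensor_injective (k := k) independent ?_
    rw [monoidAlgebraToTensor_mul, hp, hq, smul_mul_smul_comm, hxy, smul_zero, map_zero]
  refine (mul_eq_zero.1 mul_eq_zero_lift).imp (fun h ↦ ?_) fun h ↦ ?_
  · rw [h, map_zero] at hp
    exact (smul_eq_zero.1 hp.symm).resolve_left hs
  · rw [h, map_zero] at hq
    exact (smul_eq_zero.1 hq.symm).resolve_left ht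

theorem HasCommonDenominators.noZeroDivisors [NoZeroDivisors k] [Mul M] [UniqueProds M]
    {e : M →ₙ* ε} (he : HasCommonDenominators k K e) (independent : LinearIndependent k e) :
    NoZeroDivisors ε :=
  have := he.noZeroDivisors_tensorProduct (D := k) independent
  (Algebra.TensorProduct.lid k ε).symm.injective.noZeroDivisors _ (map_zero _) (map_mul _)

end DomainCriterion

section CrossedProductAlgebra

variable {K E G : Type*} [Field K] [Field E] [Algebra K E] [Group G] [MulSemiringAction G E]
  [SMulCommClass G K E] [Fintype G] [DecidableEq G] {f : G → G → E}

/-- The `E`-basis of the crossed product of a 2-cocycle `f` indexed by `G`: the function `α`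
corresponds to `∑ g, α g * u g`, where `u g * a = g • a * u g` and `u g * u h = f g h * u (g * h)`
for `a : E` and `g h : G`. -/
def IsMultiplier.crossedProductEquiv (K : Type*) [Field K] [Algebra K E] [SMulCommClass G K E]
    (hf : IsMultiplier f f) : (G → E) ≃ₗ[K] twistedMatrix K f where
  toFun α := ⟨.of fun x y ↦ f x (x⁻¹ * y) * x • α (x⁻¹ * y), fun g x y ↦ by
    have := hf.smul_mul g x (x⁻¹ * y)
    simp only [smul_eq_mul, mul_inv_cancel_left] at this
    simp only [smul_eq_mul, Matrix.of_apply, mul_inv_rev, mul_assoc, inv_mul_cancel_left, smul_mul',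
      smul_smul]
    linear_combination -((g * x) • α (x⁻¹ * y)) * this⟩
  map_add' α β := by ext x y; simp [mul_add]
  map_smul' c α := by ext x y; simp [smul_comm x c]
  invFun M g := M.1 1 g / f 1 g
  left_inv α := by
    ext g
    simp [hf.ne_zero 1 g]
  right_inv M := by
    ext x y
    have translate := M.2 x 1 (x⁻¹ * y)
    rw [smul_eq_mul, mul_one, smul_eq_mul, mul_inv_cancel_left] at translate
    simp [smul_div₀', hf.smul_one_apply, mul_div_assoc', ← translate, hf.ne_zero x 1]

theorem IsMultiplier.crossedProductEquiv_single_mul_single (hf : IsMultiplier f f) (g h : G)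
    (a b : E) :
    hf.crossedProductEquiv K (Pi.single g a) * hf.crossedProductEquiv K (Pi.single h b) =
      hf.crossedProductEquiv K (Pi.single (g * h) (a * g • b * f g h)) := by
  ext x y
  change ∑ z, f x (x⁻¹ * z) * x • (Pi.single g a : G → E) (x⁻¹ * z) *
    (f z (z⁻¹ * y) * z • (Pi.single h b : G → E) (z⁻¹ * y)) =
      f x (x⁻¹ * y) * x • (Pi.single (g * h) (a * g • b * f g h) : G → E) (x⁻¹ * y)
  rw [Fintype.sum_eq_single (x * g) fun z hz ↦ by
    rw [Pi.single_eq_of_ne (by rwa [Ne, inv_mul_eq_iff_eq_mul]), smul_zero, mul_zero, zero_mul]]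
  obtain rfl | hy := eq_or_ne y (x * g * h)
  · have := hf.smul_mul x g h
    simp only [smul_eq_mul] at this
    simp only [mul_assoc, inv_mul_cancel_left, mul_inv_rev, Pi.single_eq_same, smul_mul', smul_smul]
    linear_combination -(x • a * (x * g) • b) * this
  · have left : (x * g)⁻¹ * y ≠ h := by rwa [Ne, inv_mul_eq_iff_eq_mul]
    have right : x⁻¹ * y ≠ g * h := by rwa [Ne, inv_mul_eq_iff_eq_mul, ← mul_assoc]
    simp only [Pi.single_eq_of_ne left, Pi.single_eq_of_ne right, smul_zero, mul_zero]

end CrossedProductAlgebra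

section GenericField

/-- The field of rational functions in the variables `σ`. -/
abbrev RationalFunctions (k σ : Type*) [Field k] : Type _ := FractionRing (MvPolynomial σ k)

variable {k G σ : Type*} [Field k] [Group G] [MulAction G σ]

/-- The action on polynomials permuting the variables. -/
noncomputable instance permuteVariables : MulSemiringAction G (MvPolynomial σ k) where
  smul g p := MvPolynomial.rename (g • ·) p
  one_smul p := by
    change MvPolynomial.rename ((1 : G) • ·) p = p
    simp only [one_smul]
    exact MvPolynomial.rename_id_apply p
  mul_smul g h p := by
    change MvPolynomial.rename ((g * h) • ·) p =
      MvPolynomial.rename (g • ·) (MvPolynomial.rename (h • ·) p)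
    simp [MvPolynomial.rename_rename, Function.comp_def, mul_smul]
  smul_zero g := map_zero (MvPolynomial.rename (g • ·))
  smul_add g := map_add (MvPolynomial.rename (g • ·))
  smul_one g := map_one (MvPolynomial.rename (g • ·))
  smul_mul g := map_mul (MvPolynomial.rename (g • ·))

theorem smul_eq_rename (g : G) (p : MvPolynomial σ k) : g • p = MvPolynomial.rename (g • ·) p :=
  rfl

instance [FaithfulSMul G σ] : FaithfulSMul G (MvPolynomial σ k) where
  eq_of_smul_eq_smul h := FaithfulSMul.eq_of_smul_eq_smul (α := σ) fun i ↦ by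
    simpa [smul_eq_rename, MvPolynomial.X_injective.eq_iff] using h (MvPolynomial.X i)

noncomputable instance : MulSemiringAction G (RationalFunctions k σ) :=
  IsFractionRing.mulSemiringAction G (MvPolynomial σ k) (RationalFunctions k σ)

instance : SMulDistribClass G (MvPolynomial σ k) (RationalFunctions k σ) :=
  IsFractionRing.smulDistribClass G (MvPolynomial σ k) (RationalFunctions k σ)

instance [FaithfulSMul G σ] : FaithfulSMul G (RationalFunctions k σ) :=
  IsFractionRing.faithfulSMul G (MvPolynomial σ k) (RationalFunctions k σ)

instance : SMulCommClass G k (RationalFunctions k σ) where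
  smul_comm g c x := by
    rw [Algebra.smul_def, Algebra.smul_def, smul_mul',
      IsScalarTower.algebraMap_apply k (MvPolynomial σ k) (RationalFunctions k σ),
      ← algebraMap.coe_smul', smul_eq_rename, MvPolynomial.algebraMap_eq, MvPolynomial.rename_C]

/-- The rational functions invariant under the permutations of the variables by `G`. -/
noncomputable abbrev InvariantFunctions (k G σ : Type*) [Field k] [Group G] [MulAction G σ] :
    IntermediateField k (RationalFunctions k σ) :=
  FixedPoints.intermediateField G

instance [Finite G] [FaithfulSMul G σ] :
    IsGaloisGroup G (InvariantFunctions k G σ) (RationalFunctions k σ) :=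
  inferInstanceAs (IsGaloisGroup G (FixedPoints.subfield G (RationalFunctions k σ)) _)

/-- The monomial with exponents `v`, as a rational function. -/
noncomputable def monomialFunction (k : Type*) [Field k] (v : σ →₀ ℕ) : RationalFunctions k σ :=
  algebraMap (MvPolynomial σ k) _ (MvPolynomial.monomial v 1)

theorem monomialFunction_ne_zero (v : σ →₀ ℕ) : monomialFunction k v ≠ 0 := by
  simp [monomialFunction]

theorem monomialFunction_add (v w : σ →₀ ℕ) :
    monomialFunction k (v + w) = monomialFunction k v * monomialFunction k w := by
  rw [monomialFunction, monomialFunction, monomialFunction, ← map_mul, MvPolynomial.monomial_mul,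
    one_mul]

theorem monomialFunction_nsmul (n : ℕ) (v : σ →₀ ℕ) :
    monomialFunction k (n • v) = monomialFunction k v ^ n := by
  rw [monomialFunction, monomialFunction, ← map_pow, MvPolynomial.monomial_pow, one_pow]

theorem monomialFunction_sum {κ : Type*} (S : Finset κ) (v : κ → σ →₀ ℕ) :
    monomialFunction k (∑ j ∈ S, v j) = ∏ j ∈ S, monomialFunction k (v j) := by
  simp only [monomialFunction, MvPolynomial.monomial_sum_one, map_prod]

theorem smul_monomialFunction (g : G) (v : σ →₀ ℕ) :
    g • monomialFunction k v = monomialFunction k (v.mapDomain (g • ·)) := by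
  rw [monomialFunction, ← algebraMap.coe_smul', smul_eq_rename, MvPolynomial.rename_monomial,
    monomialFunction]

end GenericField

section Monomials

variable (k : Type*) {G σ : Type*} [Field k] [Group G] [MulAction G σ] {c : G → G → σ →₀ ℕ}

/-- A 2-cocycle of `G` with values in the exponents of monomials. Written additively, it is the
cocycle `fun g h ↦ monomialFunction k (c g h)`. -/
def IsExponentCocycle (c : G → G → σ →₀ ℕ) : Prop :=
  ∀ g h x, (c h x).mapDomain (g • ·) + c g (h * x) = c g h + c (g * h) x

theorem IsExponentCocycle.isMultiplier (hc : IsExponentCocycle c) :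
    IsMultiplier (fun g h ↦ monomialFunction k (c g h)) fun g h ↦ monomialFunction k (c g h) where
  ne_zero _ _ := monomialFunction_ne_zero _
  smul_mul g h x := by
    rw [smul_monomialFunction, smul_eq_mul, ← monomialFunction_add, ← monomialFunction_add,
      hc g h x]

/-- The elements `X ^ v * u g` of a crossed product, where `c` is the cocycle `u` satisfies. They
form a magma which is not a monoid: `u 1` need not be `1`. -/
def Monomial (_c : G → G → σ →₀ ℕ) : Type _ := Σ _ : G, σ →₀ ℕ

noncomputable instance : Mul (Monomial c) where
  mul x y := ⟨x.1 * y.1, x.2 + y.2.mapDomain (x.1 • ·) + c x.1 y.1⟩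

theorem Monomial.fst_mul (x y : Monomial c) : (x * y).1 = x.1 * y.1 := rfl

theorem Monomial.snd_mul (x y : Monomial c) :
    (x * y).2 = x.2 + y.2.mapDomain (x.1 • ·) + c x.1 y.1 := rfl

/-- Over a fixed pair of elements of `G`, multiplying monomials is adding exponents,
up to translation by `c` and an automorphism of the second factor. -/
theorem Monomial.exists_uniqueMul_of_fst_eq {A B : Finset (Monomial c)} (hA : A.Nonempty)
    (hB : B.Nonempty) {g h : G} (fst_A : ∀ x ∈ A, x.1 = g) (fst_B : ∀ y ∈ B, y.1 = h) :
    ∃ x ∈ A, ∃ y ∈ B, UniqueMul A B x y := by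
  classical
  let left : Monomial c → σ →₀ ℕ := Sigma.snd
  let right : Monomial c → σ →₀ ℕ := fun y ↦ y.2.mapDomain (g • ·)
  obtain ⟨_, hv, _, hw, unique⟩ :=
    UniqueSums.uniqueAdd_of_nonempty (hA.image left) (hB.image right)
  obtain ⟨x, hx, rfl⟩ := Finset.mem_image.1 hv
  obtain ⟨y, hy, rfl⟩ := Finset.mem_image.1 hw
  refine ⟨x, hx, y, hy, fun x' y' hx' hy' eq ↦ ?_⟩
  have exponents : left x' + right y' = left x + right y := by
    have := congrArg Sigma.snd eq
    rwa [snd_mul, snd_mul, fst_A x hx, fst_A x' hx', fst_B y hy, fst_B y' hy', add_left_inj] at this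
  obtain ⟨eq_left, eq_right⟩ :=
    unique (Finset.mem_image_of_mem _ hx') (Finset.mem_image_of_mem _ hy') exponents
  exact ⟨Sigma.ext ((fst_A x' hx').trans (fst_A x hx).symm) (heq_of_eq eq_left),
    Sigma.ext ((fst_B y' hy').trans (fst_B y hy).symm)
      (heq_of_eq (Finsupp.mapDomain_injective (MulAction.injective g) eq_right))⟩

/-- Monomials, as functions `G → MvPolynomial σ k`. -/
noncomputable def Monomial.basis (c : G → G → σ →₀ ℕ) [Fintype G] :
    Module.Basis (Monomial c) k (G → MvPolynomial σ k) :=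
  Pi.basis fun _ ↦ MvPolynomial.basisMonomials σ k

omit [Group G] [MulAction G σ] in
theorem Monomial.basis_apply [Fintype G] [DecidableEq G] (x : Monomial c) :
    basis k c x = Pi.single x.1 (MvPolynomial.monomial x.2 1) :=
  (Pi.basis_apply (fun _ ↦ MvPolynomial.basisMonomials σ k) x).trans <| by
    rw [MvPolynomial.coe_basisMonomials]

theorem Monomial.uniqueProds {H : Type*} [Mul H] [UniqueProds H] (π : Monomial c →ₙ* H)
    (hπ : ∀ x y, π x = π y → x.1 = y.1) : UniqueProds (Monomial c) where
  uniqueMul_of_nonempty {A B} hA hB := by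
    classical
    obtain ⟨_, ha, _, hb, unique⟩ := UniqueProds.uniqueMul_of_nonempty (hA.image π) (hB.image π)
    obtain ⟨a, haA, rfl⟩ := Finset.mem_image.1 ha
    obtain ⟨b, hbB, rfl⟩ := Finset.mem_image.1 hb
    obtain ⟨x, hx, y, hy, unique_fiber⟩ := exists_uniqueMul_of_fst_eq
      (A := {x ∈ A | π x = π a}) (B := {y ∈ B | π y = π b})
      ⟨a, Finset.mem_filter.2 ⟨haA, rfl⟩⟩ ⟨b, Finset.mem_filter.2 ⟨hbB, rfl⟩⟩
      (fun x hx ↦ hπ x a (Finset.mem_filter.1 hx).2) fun y hy ↦ hπ y b (Finset.mem_filter.1 hy).2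
    obtain ⟨hxA, hxa⟩ := Finset.mem_filter.1 hx
    obtain ⟨hyB, hyb⟩ := Finset.mem_filter.1 hy
    exact ⟨x, hxA, y, hyB, .of_image_filter π hxa hyb unique unique_fiber⟩

section Embedding

variable {k} [Fintype G] [DecidableEq G] {K : Type*} [Field K] [Algebra k K]
  [Algebra K (RationalFunctions k σ)] [IsScalarTower k K (RationalFunctions k σ)]
  [SMulCommClass G K (RationalFunctions k σ)]

/-- The elements of the crossed product whose coefficients in `RationalFunctions k σ` are
polynomials. -/
noncomputable def IsExponentCocycle.polynomialCrossedProduct (K : Type*) [Field K] [Algebra k K]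
    [Algebra K (RationalFunctions k σ)] [IsScalarTower k K (RationalFunctions k σ)]
    [SMulCommClass G K (RationalFunctions k σ)] (hc : IsExponentCocycle c) :
    (G → MvPolynomial σ k) →ₗ[k] twistedMatrix K fun g h ↦ monomialFunction k (c g h) :=
  ((hc.isMultiplier k).crossedProductEquiv K).toLinearMap.restrictScalars k ∘ₗ
    (IsScalarTower.toAlgHom k (MvPolynomial σ k) (RationalFunctions k σ)).toLinearMap.compLeft G

theorem IsExponentCocycle.polynomialCrossedProduct_injective (hc : IsExponentCocycle c) :
    Function.Injective (hc.polynomialCrossedProduct (k := k) K) :=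
  ((hc.isMultiplier k).crossedProductEquiv K).injective.comp
    (FaithfulSMul.algebraMap_injective (MvPolynomial σ k) (RationalFunctions k σ)).comp_left

theorem IsExponentCocycle.polynomialCrossedProduct_basis (hc : IsExponentCocycle c)
    (x : Monomial c) : hc.polynomialCrossedProduct K (Monomial.basis k c x) =
      (hc.isMultiplier k).crossedProductEquiv K (Pi.single x.1 (monomialFunction k x.2)) := by
  rw [Monomial.basis_apply]
  refine congrArg ((hc.isMultiplier k).crossedProductEquiv K) (funext fun h ↦ ?_)
  exact Pi.apply_single (fun _ ↦ algebraMap (MvPolynomial σ k) (RationalFunctions k σ))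
    (fun _ ↦ map_zero _) x.1 (MvPolynomial.monomial x.2 1) h

/-- The embedding of the monomials into the crossed product. -/
noncomputable def IsExponentCocycle.monomialEmbedding (k K : Type*) [Field k] [Field K]
    [Algebra k K] [Algebra K (RationalFunctions k σ)] [IsScalarTower k K (RationalFunctions k σ)]
    [SMulCommClass G K (RationalFunctions k σ)] (hc : IsExponentCocycle c) :
    Monomial c →ₙ* twistedMatrix K fun g h ↦ monomialFunction k (c g h) where
  toFun x := hc.polynomialCrossedProduct K (Monomial.basis k c x)
  map_mul' x y := by
    simp only [polynomialCrossedProduct_basis,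
      IsMultiplier.crossedProductEquiv_single_mul_single, smul_monomialFunction,
      ← monomialFunction_add, Monomial.snd_mul, Monomial.fst_mul]

theorem IsExponentCocycle.coe_monomialEmbedding (hc : IsExponentCocycle c) :
    ⇑(hc.monomialEmbedding k K) = hc.polynomialCrossedProduct K ∘ Monomial.basis k c :=
  rfl

theorem IsExponentCocycle.linearIndependent_monomialEmbedding (hc : IsExponentCocycle c) :
    LinearIndependent k (hc.monomialEmbedding k K) := by
  rw [hc.coe_monomialEmbedding]
  exact (Module.Basis.linearIndependent _).map' _
    (LinearMap.ker_eq_bot.2 hc.polynomialCrossedProduct_injective)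

theorem IsExponentCocycle.span_range_monomialEmbedding (hc : IsExponentCocycle c) :
    Submodule.span k (Set.range (hc.monomialEmbedding k K)) =
      (hc.polynomialCrossedProduct K).range := by
  rw [hc.coe_monomialEmbedding, Set.range_comp, Submodule.span_image, Module.Basis.span_eq,
    Submodule.map_top]

end Embedding

end Monomials

section CommonDenominators

theorem exists_dvd_algebraMap_eq {G A K E : Type*} [Group G] [Finite G] [CommRing A] [IsDomain A]
    [MulSemiringAction G A] [CommRing K] [CommRing E] [MulSemiringAction G E] [Algebra K E]
    [Algebra.IsInvariant K E G] [Algebra A E] [FaithfulSMul A E] [SMulDistribClass G A E] {a : A}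
    (ha : a ≠ 0) : ∃ s : K, s ≠ 0 ∧ ∃ b : A, a ∣ b ∧ algebraMap K E s = algebraMap A E b := by
  cases nonempty_fintype G
  have norm_ne_zero : ∏ g : G, g • a ≠ 0 :=
    Finset.prod_ne_zero_iff.2 fun g _ ↦ (smul_ne_zero_iff_ne g).2 ha
  have smul_norm (h : G) : h • ∏ g : G, g • a = ∏ g : G, g • a := by
    simp only [Finset.smul_prod', smul_smul]
    exact Equiv.prod_comp (Equiv.mulLeft h) (· • a)
  obtain ⟨s, hs⟩ := Algebra.IsInvariant.isInvariant (G := G) (A := K)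
    (algebraMap A E (∏ g : G, g • a)) fun h ↦ by rw [← algebraMap.coe_smul', smul_norm]
  refine ⟨s, ?_, _, ?_, hs⟩
  · rintro rfl
    rw [map_zero, eq_comm, FaithfulSMul.algebraMap_eq_zero_iff] at hs
    exact norm_ne_zero hs
  · simpa using Finset.dvd_prod_of_mem (fun g : G ↦ g • a) (Finset.mem_univ 1)

variable {k G σ K : Type*} [Field k] [Group G] [MulAction G σ] {c : G → G → σ →₀ ℕ}
  [Fintype G] [DecidableEq G] [Field K] [Algebra k K] [Algebra K (RationalFunctions k σ)]
  [IsScalarTower k K (RationalFunctions k σ)] [IsGaloisGroup G K (RationalFunctions k σ)]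

theorem IsExponentCocycle.hasCommonDenominators (hc : IsExponentCocycle c) :
    HasCommonDenominators k K (hc.monomialEmbedding k K) := by
  intro S
  let coefficient (z : twistedMatrix K fun g h ↦ monomialFunction k (c g h)) :=
    ((hc.isMultiplier k).crossedProductEquiv K).symm z
  obtain ⟨b, hb⟩ := IsLocalization.exist_integer_multiples_of_finite
    (nonZeroDivisors (MvPolynomial σ k)) fun z : S × G ↦ coefficient z.1 z.2
  choose p hp using hb
  have := IsGaloisGroup.isInvariant (G := G) (A := K) (B := RationalFunctions k σ)
  obtain ⟨s, hs, _, ⟨q, rfl⟩, hsq⟩ := exists_dvd_algebraMap_eq (G := G) (K := K)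
    (E := RationalFunctions k σ) (nonZeroDivisors.coe_ne_zero b)
  refine ⟨s, hs, fun z hz ↦ ?_⟩
  rw [hc.span_range_monomialEmbedding]
  refine ⟨fun g ↦ p (⟨z, hz⟩, g) * q, ?_⟩
  suffices clear_denominators : (fun g ↦ algebraMap (MvPolynomial σ k) (RationalFunctions k σ)
      (p (⟨z, hz⟩, g) * q)) = s • coefficient z by
    exact ((hc.isMultiplier k).crossedProductEquiv K).symm.injective <|
      (LinearEquiv.symm_apply_apply _ _).trans (clear_denominators.trans (map_smul _ s z).symm)
  funext g
  rw [Pi.smul_apply, Algebra.smul_def, hsq, map_mul, map_mul, hp, Algebra.smul_def]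
  ring

end CommonDenominators

section Degree

variable {k G σ : Type*} [Field k] [Group G] [MulAction G σ]

theorem degreeOf_smul {g : G} {s : σ} (hs : g • s = s) (p : MvPolynomial σ k) :
    (g • p).degreeOf s = p.degreeOf s := by
  have := MvPolynomial.degreeOf_rename_of_injective (p := p) (MulAction.injective g) s
  rwa [hs] at this

theorem degreeOf_prod_pow_smul {g : G} {s : σ} (hs : g • s = s) {p : MvPolynomial σ k}
    (hp : p ≠ 0) (n : ℕ) :
    (∏ j ∈ Finset.range n, g ^ j • p).degreeOf s = n * p.degreeOf s := by
  have ne_zero (j : ℕ) : g ^ j • p ≠ 0 := (smul_ne_zero_iff_ne _).2 hp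
  have fixed (j : ℕ) : g ^ j • s = s :=
    (MulAction.stabilizer G s).pow_mem hs j
  induction n with
  | zero => simp
  | succ n ih =>
    rw [Finset.prod_range_succ, MvPolynomial.degreeOf_mul_eq
      (Finset.prod_ne_zero_iff.2 fun j _ ↦ ne_zero j) (ne_zero n), ih, degreeOf_smul (fixed n)]
    ring

/-- The degree in a variable fixed by `g` is unchanged by `g`, so that the product has `n` times the
degree of `b`. -/
theorem dvd_of_prod_pow_smul_eq_monomialFunction {g : G} {s : σ} (hs : g • s = s)
    {b : RationalFunctions k σ} (hb : b ≠ 0) {n : ℕ} {v : σ →₀ ℕ}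
    (h : ∏ j ∈ Finset.range n, g ^ j • b = monomialFunction k v) : n ∣ v s := by
  obtain ⟨p, q, hq, rfl⟩ := IsFractionRing.div_surjective (A := MvPolynomial σ k) b
  have hq0 : q ≠ 0 := nonZeroDivisors.ne_zero hq
  have hp0 : p ≠ 0 := by
    rintro rfl
    simp at hb
  have norm_q_ne_zero : ∏ j ∈ Finset.range n, g ^ j • q ≠ 0 :=
    Finset.prod_ne_zero_iff.2 fun j _ ↦ (smul_ne_zero_iff_ne _).2 hq0
  have norm_eq : ∏ j ∈ Finset.range n, g ^ j • p =
      MvPolynomial.monomial v 1 * ∏ j ∈ Finset.range n, g ^ j • q := by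
    simp only [smul_div₀', Finset.prod_div_distrib, ← algebraMap.coe_smul', ← map_prod] at h
    rwa [div_eq_iff (by rwa [Ne, FaithfulSMul.algebraMap_eq_zero_iff]), monomialFunction,
      ← map_mul, (IsFractionRing.injective (MvPolynomial σ k) _).eq_iff] at h
  have degree_eq : n * p.degreeOf s = v s + n * q.degreeOf s := by
    rw [← degreeOf_prod_pow_smul hs hp0, ← degreeOf_prod_pow_smul hs hq0, norm_eq,
      MvPolynomial.degreeOf_mul_eq (by simp) norm_q_ne_zero,
      MvPolynomial.degreeOf_monomial_eq _ _ one_ne_zero]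
  exact (Nat.dvd_add_left (dvd_mul_right n _)).1 (degree_eq ▸ dvd_mul_right n _)

end Degree

section BrauerClass

variable {K E G X : Type*} [Field K] [Field E] [Algebra K E] [Group G] [Finite G]
  [MulSemiringAction G E] [IsGaloisGroup G K E] [MulAction G X] [Fintype X] [DecidableEq X]
  [Nonempty X] {f : G → G → E} {F : G → X → E} {κ : Type*} [Fintype κ]

theorem IsMultiplier.exists_tensorPower_algEquiv_matrix (hF : IsMultiplier f F)
    (hf : IsCoboundary fun g h ↦ f g h ^ Fintype.card κ) :
    ∃ r : ℕ, 0 < r ∧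
      Nonempty ((⨂[K] (_ : κ), twistedMatrix K F) ≃ₐ[K] Matrix (Fin r) (Fin r) K) := by
  classical
  obtain ⟨φ⟩ := hF.nonempty_tensorPower_algEquiv (K := K) (κ := κ)
  obtain ⟨ψ⟩ := hF.prod.nonempty_algEquiv_matrix (K := K) hf
  exact ⟨_, Fintype.card_pos, ⟨φ.trans ψ⟩⟩

theorem IsMultiplier.isCoboundary_pow_of_tensorPower_algEquiv_matrix (hF : IsMultiplier f F)
    {ι : Type*} [Fintype ι] [DecidableEq ι]
    (φ : (⨂[K] (_ : κ), twistedMatrix K F) ≃ₐ[K] Matrix ι ι K) :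
    IsCoboundary fun g h ↦ f g h ^ Fintype.card κ := by
  classical
  obtain ⟨ψ⟩ := hF.nonempty_tensorPower_algEquiv (K := K) (κ := κ)
  exact hF.prod.isCoboundary_of_algEquiv_matrix (ψ.symm.trans φ)

end BrauerClass

section Norm

theorem IsCoboundary.exists_prod_pow_smul_eq {E G : Type*} [Field E] [Group G]
    [MulSemiringAction G E] {f : G → G → E} (hf : IsCoboundary f) {g : G} {n : ℕ}
    (hg : g ^ n = 1) :
    ∃ b : E, b ≠ 0 ∧ ∏ j ∈ Finset.range n, g ^ j • b = ∏ j ∈ Finset.range n, f (g ^ j) g := by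
  obtain ⟨β, hβ⟩ := hf
  have telescope (N : ℕ) : (∏ j ∈ Finset.range N, g ^ j • β g) * β 1 =
      (∏ j ∈ Finset.range N, f (g ^ j) g) * β (g ^ N) := by
    induction N with
    | zero => simp
    | succ N ih =>
      have step := hβ.smul_mul (g ^ N) g ()
      rw [← pow_succ] at step
      rw [Finset.prod_range_succ, Finset.prod_range_succ]
      linear_combination (g ^ N • β g) * ih + (∏ j ∈ Finset.range N, f (g ^ j) g) * step
  refine ⟨β g, hβ.ne_zero g (), mul_right_cancel₀ (hβ.ne_zero 1 ()) ?_⟩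
  rw [telescope, hg]

theorem dvd_sum_of_isCoboundary {k G σ : Type*} [Field k] [Group G] [MulAction G σ]
    {c : G → G → σ →₀ ℕ} (hc : IsCoboundary fun g h ↦ monomialFunction k (c g h)) {g : G} {n : ℕ}
    (hg : g ^ n = 1) {s : σ} (hs : g • s = s) : n ∣ ∑ j ∈ Finset.range n, c (g ^ j) g s := by
  obtain ⟨b, hb, norm_eq⟩ := hc.exists_prod_pow_smul_eq hg
  rw [← monomialFunction_sum] at norm_eq
  simpa using dvd_of_prod_pow_smul_eq_monomialFunction hs hb norm_eq

end Norm

section Carry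

/-- The carry in the addition of two residues modulo `n`. -/
def carry {n : ℕ} (a b : ZMod n) : ℕ := (a.val + b.val) / n

variable {n : ℕ} [NeZero n]

theorem val_add_val (a b : ZMod n) : a.val + b.val = (a + b).val + n * carry a b := by
  rw [ZMod.val_add, carry, Nat.mod_add_div]

theorem carry_add_carry (a b c : ZMod n) :
    carry b c + carry a (b + c) = carry a b + carry (a + b) c := by
  have h₁ := val_add_val b c
  have h₂ := val_add_val a (b + c)
  have h₃ := val_add_val a b
  have h₄ := val_add_val (a + b) c
  rw [← add_assoc a b c] at h₂
  apply Nat.eq_of_mul_eq_mul_left (NeZero.pos n)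
  linarith

theorem sum_carry_nsmul (a : ZMod n) : ∑ j ∈ Finset.range n, carry (j • a) a = a.val := by
  have telescope (N : ℕ) :
      (N • a).val + n * ∑ j ∈ Finset.range N, carry (j • a) a = N * a.val := by
    induction N with
    | zero => simp
    | succ N ih =>
      have := val_add_val (N • a) a
      rw [Finset.sum_range_succ, succ_nsmul]
      linarith
  apply Nat.eq_of_mul_eq_mul_left (NeZero.pos n)
  simpa using telescope n

end Carry

section CyclicProduct

variable {ι : Type*} {m : ι → ℕ}

/-- The product of the cyclic groups of orders `m i`. -/
abbrev CyclicProduct (m : ι → ℕ) : Type _ := Multiplicative (∀ i, ZMod (m i))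

/-- The variables of the generic field: one for each element of the group, which make its action
faithful, and one fixed variable for each cyclic factor. -/
inductive Variable (m : ι → ℕ)
  | regular (g : CyclicProduct m)
  | fixed (i : ι)

instance : MulAction (CyclicProduct m) (Variable m) where
  smul
    | g, .regular h => .regular (g * h)
    | _, .fixed i => .fixed i
  one_smul
    | .regular h => congrArg Variable.regular (one_mul h)
    | .fixed _ => rfl
  mul_smul
    | g, g', .regular h => congrArg Variable.regular (mul_assoc g g' h)
    | _, _, .fixed _ => rfl

theorem smul_fixed (g : CyclicProduct m) (i : ι) : g • Variable.fixed (m := m) i = .fixed i := rfl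

instance : FaithfulSMul (CyclicProduct m) (Variable m) where
  eq_of_smul_eq_smul h := by
    simpa using Variable.regular.inj (h (.regular 1))

theorem mapDomain_smul_apply_fixed (g : CyclicProduct m) (v : Variable m →₀ ℕ) (i : ι) :
    v.mapDomain (g • ·) (.fixed i) = v (.fixed i) :=
  Finsupp.mapDomain_apply (MulAction.injective g) v (.fixed i)

variable [Finite ι]

/-- The exponents of a monomial in the fixed variables. -/
noncomputable def fixedExponents (m : ι → ℕ) : (ι → ℕ) →+ (Variable m →₀ ℕ) :=
  (Finsupp.mapDomain.addMonoidHom Variable.fixed).comp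
    (Finsupp.linearEquivFunOnFinite ℕ ℕ ι).symm.toLinearMap.toAddMonoidHom

theorem fixedExponents_apply_fixed (a : ι → ℕ) (i : ι) : fixedExponents m a (.fixed i) = a i :=
  Finsupp.mapDomain_apply (fun _ _ ↦ Variable.fixed.inj) _ i

theorem mapDomain_smul_fixedExponents (g : CyclicProduct m) (a : ι → ℕ) :
    (fixedExponents m a).mapDomain (g • ·) = fixedExponents m a :=
  (Finsupp.mapDomain_comp (f := Variable.fixed) (g := (g • ·))).symm

/-- The product over `i` of the cocycles of `ZMod (m i)` given by the carry in addition, with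
values in the powers of the `i`-th fixed variable. -/
noncomputable def carryCocycle (m : ι → ℕ) (g h : CyclicProduct m) : Variable m →₀ ℕ :=
  fixedExponents m fun i ↦ carry (g.toAdd i) (h.toAdd i)

variable [∀ i, NeZero (m i)]

theorem isExponentCocycle_carryCocycle : IsExponentCocycle (carryCocycle m) := by
  intro g h x
  rw [carryCocycle, mapDomain_smul_fixedExponents, carryCocycle, carryCocycle, carryCocycle,
    ← map_add, ← map_add]
  exact congrArg _ (funext fun i ↦ carry_add_carry _ _ _)

/-- The numbers `g i + m i * v i` attached to a monomial `X ^ v * u g`, where `v i` is the exponent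
of the `i`-th fixed variable. They are additive because adding residues with carry is adding
natural numbers. -/
noncomputable def totalExponents (m : ι → ℕ) [∀ i, NeZero (m i)] :
    Monomial (carryCocycle m) →ₙ* Multiplicative (ι → ℕ) where
  toFun x := .ofAdd fun i ↦ (x.1.toAdd i).val + m i * x.2 (.fixed i)
  map_mul' x y := congrArg Multiplicative.ofAdd <| funext fun i ↦ by
    have := val_add_val (x.1.toAdd i) (y.1.toAdd i)
    rw [Monomial.fst_mul, Monomial.snd_mul, Finsupp.add_apply, Finsupp.add_apply,
      mapDomain_smul_apply_fixed, carryCocycle, fixedExponents_apply_fixed, toAdd_mul, Pi.add_apply,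
      Pi.add_apply, toAdd_ofAdd, toAdd_ofAdd]
    linarith

theorem fst_eq_of_totalExponents_eq {x y : Monomial (carryCocycle m)}
    (h : totalExponents m x = totalExponents m y) : x.1 = y.1 := by
  refine Multiplicative.toAdd.injective (funext fun i ↦ ?_)
  have := congrArg (Nat.cast : ℕ → ZMod (m i)) (congrFun (Multiplicative.ofAdd.injective h) i)
  simpa using this

instance : UniqueProds (Monomial (carryCocycle m)) :=
  Monomial.uniqueProds (totalExponents m) fun _ _ ↦ fst_eq_of_totalExponents_eq

theorem dvd_of_isCoboundary_carryCocycle_pow {k : Type*} [Field k] {e : ℕ}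
    (h : IsCoboundary fun g h ↦ monomialFunction k (carryCocycle m g h) ^ e) (i : ι) :
    m i ∣ e := by
  classical
  obtain trivial_factor | hm := eq_or_ne (m i) 1
  · exact trivial_factor ▸ one_dvd e
  simp only [← monomialFunction_nsmul] at h
  let g : CyclicProduct m := .ofAdd (Pi.single i 1)
  have g_apply : g.toAdd i = 1 := Pi.single_eq_same i 1
  have pow_apply (j : ℕ) : (g ^ j).toAdd i = j • (1 : ZMod (m i)) := by simp [g]
  have pow_eq_one : g ^ m i = 1 := by
    rw [← ofAdd_nsmul, ← Pi.single_smul]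
    simp
  have dvd_sum := dvd_sum_of_isCoboundary h pow_eq_one (smul_fixed g i)
  simp only [Finsupp.smul_apply, carryCocycle, fixedExponents_apply_fixed, pow_apply, g_apply,
    ← Finset.smul_sum, sum_carry_nsmul, ZMod.val_one'' hm] at dvd_sum
  simpa using dvd_sum

theorem isCoboundary_carryCocycle_pow {k : Type*} [Field k] {e : ℕ} (h : ∀ i, m i ∣ e) :
    IsCoboundary fun g h ↦ monomialFunction k (carryCocycle m g h) ^ e := by
  simp only [← monomialFunction_nsmul]
  refine ⟨fun g ↦ monomialFunction k (fixedExponents m fun i ↦ e / m i * (g.toAdd i).val),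
    fun _ _ ↦ monomialFunction_ne_zero _, fun g h' _ ↦ ?_⟩
  rw [smul_monomialFunction, mapDomain_smul_fixedExponents, carryCocycle]
  simp only [← monomialFunction_add, ← map_nsmul, ← map_add]
  refine congrArg _ (congrArg _ (funext fun i ↦ ?_))
  obtain ⟨q, rfl⟩ := h i
  have := val_add_val (g.toAdd i) (h'.toAdd i)
  simp only [Pi.add_apply, Pi.smul_apply, smul_eq_mul, toAdd_mul,
    Nat.mul_div_cancel_left q (NeZero.pos (m i))]
  linear_combination q * this

end CyclicProduct

section GenericCrossedProduct

variable {k K ι : Type*} [Field k] [Field K] [Fintype ι] [DecidableEq ι] {m : ι → ℕ}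
  [∀ i, NeZero (m i)] [Algebra K (RationalFunctions k (Variable m))]

/-- The crossed product over `K` of the product of the cyclic groups of orders `m i` by the carry
cocycle: the tensor product over `i` of generic cyclic algebras of degrees `m i`. -/
noncomputable abbrev GenericCrossedProduct (k K : Type*) [Field k] [Field K] (m : ι → ℕ)
    [∀ i, NeZero (m i)] [Algebra K (RationalFunctions k (Variable m))]
    [SMulCommClass (CyclicProduct m) K (RationalFunctions k (Variable m))] :
    Subalgebra K
      (Matrix (CyclicProduct m) (CyclicProduct m) (RationalFunctions k (Variable m))) :=
  twistedMatrix K fun g h ↦ monomialFunction k (carryCocycle m g h)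

variable [IsGaloisGroup (CyclicProduct m) K (RationalFunctions k (Variable m))]

theorem finrank_genericCrossedProduct :
    Module.finrank K (GenericCrossedProduct k K m) = (∏ i, m i) ^ 2 := by
  rw [(isExponentCocycle_carryCocycle.isMultiplier k).finrank_twistedMatrix,
    Fintype.card_multiplicative, Fintype.card_pi]
  simp only [ZMod.card]

theorem finite_genericCrossedProduct : Module.Finite K (GenericCrossedProduct k K m) :=
  (isExponentCocycle_carryCocycle.isMultiplier k).finite_twistedMatrix

theorem isCentral_genericCrossedProduct : Algebra.IsCentral K (GenericCrossedProduct k K m) :=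
  (isExponentCocycle_carryCocycle.isMultiplier k).isCentral_twistedMatrix

theorem exists_tensorPower_genericCrossedProduct_algEquiv_matrix {e : ℕ} (h : ∀ i, m i ∣ e) :
    ∃ r : ℕ, 0 < r ∧ Nonempty
      ((⨂[K] (_ : Fin e), GenericCrossedProduct k K m) ≃ₐ[K] Matrix (Fin r) (Fin r) K) :=
  (isExponentCocycle_carryCocycle.isMultiplier k).exists_tensorPower_algEquiv_matrix <| by
    rw [Fintype.card_fin]
    exact isCoboundary_carryCocycle_pow h

theorem dvd_of_tensorPower_genericCrossedProduct_algEquiv_matrix {e r : ℕ}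
    (φ : (⨂[K] (_ : Fin e), GenericCrossedProduct k K m) ≃ₐ[K] Matrix (Fin r) (Fin r) K)
    (i : ι) : m i ∣ e := by
  have coboundary := (isExponentCocycle_carryCocycle.isMultiplier
    k).isCoboundary_pow_of_tensorPower_algEquiv_matrix φ
  rw [Fintype.card_fin] at coboundary
  exact dvd_of_isCoboundary_carryCocycle_pow coboundary i

variable [Algebra k K] [IsScalarTower k K (RationalFunctions k (Variable m))]

theorem noZeroDivisors_genericCrossedProduct : NoZeroDivisors (GenericCrossedProduct k K m) :=
  (isExponentCocycle_carryCocycle (m := m)).hasCommonDenominators.noZeroDivisors (k := k)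
    isExponentCocycle_carryCocycle.linearIndependent_monomialEmbedding

theorem noZeroDivisors_tensor_genericCrossedProduct {D : Type*} [Ring D] [NoZeroDivisors D]
    [Algebra k D] : NoZeroDivisors (D ⊗[k] GenericCrossedProduct k K m) :=
  (isExponentCocycle_carryCocycle (m := m)).hasCommonDenominators.noZeroDivisors_tensorProduct
    isExponentCocycle_carryCocycle.linearIndependent_monomialEmbedding

end GenericCrossedProduct

theorem exists_list_dvd_prod_eq {d n : ℕ} (hn : n ≠ 0) (hdvd : d ∣ n)
    (hsf : ∀ p : ℕ, p.Prime → p ∣ n → p ∣ d) :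
    ∃ L : List ℕ, d ∈ L ∧ (∀ m ∈ L, m ∣ d) ∧ L.prod = n := by
  obtain ⟨q, rfl⟩ := hdvd
  refine ⟨d :: q.primeFactorsList, List.mem_cons_self, fun m hm ↦ ?_, ?_⟩
  · obtain rfl | hm := List.mem_cons.1 hm
    · rfl
    · exact hsf m (Nat.prime_of_mem_primeFactorsList hm)
        ((Nat.dvd_of_mem_primeFactorsList hm).mul_left d)
  · rw [List.prod_cons, Nat.prod_primeFactorsList (right_ne_zero_of_mul hn)]

theorem isUnit_of_ne_zero_of_noZeroDivisors_tensorProduct {k K D ε : Type*} [CommRing k] [Field K]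
    [Algebra k K] [Ring D] [Algebra k D] [Module.Finite k D] [Ring ε] [Algebra K ε] [Algebra k ε]
    [IsScalarTower k K ε] [Module.Finite K ε] [NoZeroDivisors (D ⊗[k] ε)] {x : D ⊗[k] ε}
    (hx : x ≠ 0) : IsUnit x := by
  let swap := Algebra.TensorProduct.comm k D ε
  have swap_ne_zero : swap x ≠ 0 := (map_ne_zero_iff swap swap.injective).2 hx
  have := swap.symm.injective.noZeroDivisors _ (map_zero _) (map_mul _)
  have : Nontrivial (ε ⊗[k] D) := ⟨_, _, swap_ne_zero⟩
  have : IsDomain (ε ⊗[k] D) := NoZeroDivisors.to_isDomain _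
  have : Module.Finite K (ε ⊗[k] D) := .trans ε _
  have := (FiniteDimensional.isUnit K swap_ne_zero).map swap.symm
  rwa [AlgEquiv.symm_apply_apply] at this

end CrossedProduct

open CrossedProduct in
theorem statement8_general {k : Type u} [Field k] (d n : ℕ) (hn : 0 < n) (hdvd : d ∣ n)
    (hsf : ∀ p : ℕ, p.Prime → p ∣ n → p ∣ d) :
    ∃ (K : Type u) (_ : Field K) (_ : Algebra k K)
      (ε : Type u) (_ : DivisionRing ε) (_ : Algebra K ε)
      (_ : Algebra k ε) (_ : IsScalarTower k K ε),
      Algebra.IsCentral K ε ∧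
      Module.finrank K ε = n ^ 2 ∧
      (∃ r : ℕ, 0 < r ∧
        Nonempty ((⨂[K] (_ : Fin d), ε) ≃ₐ[K] Matrix (Fin r) (Fin r) K)) ∧
      (∀ m : ℕ, 0 < m → m < d → ∀ r : ℕ,
        ¬ Nonempty ((⨂[K] (_ : Fin m), ε) ≃ₐ[K] Matrix (Fin r) (Fin r) K)) ∧
      (∀ (D : Type*) [Ring D] [NoZeroDivisors D] [Algebra k D],
        NoZeroDivisors (D ⊗[k] ε)) := by
  obtain ⟨L, hdL, hLd, rfl⟩ := exists_list_dvd_prod_eq hn.ne' hdvd hsf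
  obtain ⟨i₀, rfl⟩ := List.mem_iff_get.1 hdL
  have (i : Fin L.length) : NeZero (L.get i) :=
    ⟨ne_zero_of_dvd_ne_zero hn.ne' (List.dvd_prod (L.get_mem i))⟩
  let K := InvariantFunctions k (CyclicProduct L.get) (Variable L.get)
  have finrank_eq : Module.finrank K (GenericCrossedProduct k K L.get) = L.prod ^ 2 := by
    rw [finrank_genericCrossedProduct, ← List.prod_ofFn, List.ofFn_get]
  have : Module.Finite K (GenericCrossedProduct k K L.get) := finite_genericCrossedProduct
  have : NoZeroDivisors (GenericCrossedProduct k K L.get) := noZeroDivisors_genericCrossedProduct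
  have : IsDomain (GenericCrossedProduct k K L.get) := NoZeroDivisors.to_isDomain _
  exact ⟨K, inferInstance, inferInstance, GenericCrossedProduct k K L.get,
    divisionRingOfFiniteDimensional K _, inferInstance, inferInstance, inferInstance,
    isCentral_genericCrossedProduct, finrank_eq,
    exists_tensorPower_genericCrossedProduct_algEquiv_matrix fun i ↦ hLd _ (L.get_mem i),
    fun e he hed r ⟨φ⟩ ↦ hed.not_ge (Nat.le_of_dvd he
      (dvd_of_tensorPower_genericCrossedProduct_algEquiv_matrix φ i₀)),
    fun D ↦ noZeroDivisors_tensor_genericCrossedProduct⟩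

theorem statement8 {k : Type u} [Field k] (d n : ℕ) (hd : 0 < d) (hn : 0 < n)
    (hdvd : d ∣ n)
    -- the squarefree part of `n` divides `d`: every prime dividing `n` divides `d`
    (hsf : ∀ p : ℕ, p.Prime → p ∣ n → p ∣ d) :
    ∃ (K : Type u) (_ : Field K) (_ : Algebra k K)
      (ε : Type u) (_ : DivisionRing ε) (_ : Algebra K ε)
      (_ : Algebra k ε) (_ : IsScalarTower k K ε),
      -- `ε` is a central division algebra over `K` of degree `n`
      Algebra.IsCentral K ε ∧
      Module.finrank K ε = n ^ 2 ∧
      -- the `d`-fold tensor power `ε^{⊗d}` is split ...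
      (∃ r : ℕ, 0 < r ∧
        Nonempty ((⨂[K] (_ : Fin d), ε) ≃ₐ[K] Matrix (Fin r) (Fin r) K)) ∧
      -- ... and `ε^{⊗m}` is not split for `0 < m < d`,
      -- i.e. the Brauer class of `ε` has order exactly `d` in `Br(K)`
      (∀ m : ℕ, 0 < m → m < d → ∀ r : ℕ,
        ¬ Nonempty ((⨂[K] (_ : Fin m), ε) ≃ₐ[K] Matrix (Fin r) (Fin r) K)) ∧
      -- for every finite-dimensional central division algebra `D` over `k`,
      -- the central simple `K`-algebra `D ⊗_k ε` is a division ring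
      (∀ (D : Type u) [DivisionRing D] [Algebra k D] [Algebra.IsCentral k D]
        [FiniteDimensional k D], ∀ x : D ⊗[k] ε, x ≠ 0 → IsUnit x) := by
  obtain ⟨K, _, _, ε, _, _, _, _, central, finrank_eq, split, not_split, domain⟩ :=
    statement8_general (k := k) d n hn hdvd hsf
  have : FiniteDimensional K ε := .of_finrank_pos (finrank_eq ▸ pow_pos hn 2)
  exact ⟨K, inferInstance, inferInstance, ε, inferInstance, inferInstance, inferInstance,
    inferInstance, central, finrank_eq, split, not_split, fun D _ _ _ _ _ hx ↦
      have := domain D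
      CrossedProduct.isUnit_of_ne_zero_of_noZeroDivisors_tensorProduct (K := K) hx⟩
end
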